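/- arXiv:1403.6927 — 2 statements merged into one kernel-verified Lean document; each statement's English description precedes it below -/
import Mathlib

section
/- (Bojanov–Naidenov) Let P be a real polynomial of degree n ≥ 3 all of whose zeros are real and lie in the interval [a,b], and assume that max_{x∈[a,b]} |P(x)| = |P(a)| = 1. Let τ_1 ≤ τ_2 ≤ … ≤ τ_{n-2} denote the zeros of P''. Then |P'(τ_j)| < |P'(a)| for every j = 1, …, ⌊(n-1)/2⌋. -/
open Polynomial Set

/-- Homogenised Joukowski transform. -/
lemma bern_poly (p : ℝ[X]) (n : ℕ) (hn : p.natDegree ≤ n) (m r : ℝ) :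
    ∃ G : ℂ[X], G.natDegree ≤ 2 * n ∧ ∀ ζ : ℂ, ζ ≠ 0 →
      G.eval ζ = ζ ^ n * (p.map Complex.ofRealHom).eval (m + r * (ζ + ζ⁻¹) / 2) := by
  refine ⟨∑ k ∈ Finset.range (n + 1), C (p.coeff k : ℂ) *
    ((C (r / 2 : ℂ) * (X ^ 2 + 1) + C (m : ℂ) * X) ^ k * X ^ (n - k)), ?_, ?_⟩
  · apply natDegree_sum_le_of_forall_le
    intro k hk
    have hk' : k ≤ n := by simpa [Nat.lt_succ_iff] using hk
    have h2 : (C (r / 2 : ℂ) * (X ^ 2 + 1) + C (m : ℂ) * X : ℂ[X]).natDegree ≤ 2 := by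
      compute_degree
    calc _ ≤ _ := natDegree_C_mul_le _ _
      _ ≤ _ := natDegree_mul_le
      _ ≤ k * 2 + (n - k) := by
        gcongr
        · exact natDegree_pow_le_of_le k h2
        · exact natDegree_X_pow_le _
      _ ≤ 2 * n := by omega
  · intro ζ hζ
    have hd : (p.map Complex.ofRealHom).natDegree < n + 1 :=
      lt_of_le_of_lt (natDegree_map_le) (by omega)
    rw [eval_eq_sum_range' hd, eval_finsetSum, Finset.mul_sum]
    refine Finset.sum_congr rfl fun k hk => ?_
    have hk' : k ≤ n := by simpa [Nat.lt_succ_iff] using hk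
    simp only [eval_mul, eval_C, eval_pow, eval_add, eval_X, eval_one, coeff_map,
      Complex.ofRealHom_eq_coe]
    have e1 : (r / 2 * (ζ ^ 2 + 1) + m * ζ : ℂ) = ζ * (m + r * (ζ + ζ⁻¹) / 2) := by
      field_simp; ring
    rw [e1, mul_pow]
    have e2 : ζ ^ n = ζ ^ k * ζ ^ (n - k) := by rw [← pow_add]; congr 1; omega
    rw [e2]; ring

lemma re_div_le (ζ z : ℂ) (h1 : ‖ζ‖ = 1) (h2 : 1 < ‖z‖) : (ζ / (ζ - z)).re ≤ 1 / 2 := by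
  have hne : ζ - z ≠ 0 := by
    intro h; rw [sub_eq_zero] at h; rw [h] at h1; linarith
  have hpos : 0 < Complex.normSq (ζ - z) := Complex.normSq_pos.2 hne
  have a1 : Complex.normSq ζ = 1 := by rw [Complex.normSq_eq_norm_sq, h1]; norm_num
  have a2 : 1 < Complex.normSq z := by rw [Complex.normSq_eq_norm_sq]; nlinarith
  rw [Complex.div_re, ← add_div, div_le_iff₀ hpos]
  simp only [Complex.normSq_apply, Complex.sub_re, Complex.sub_im] at *
  nlinarith

lemma bern_re (G : ℂ[X]) (n : ℕ) (hG : G.natDegree ≤ 2 * n)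
    (hb : ∀ ζ : ℂ, ‖ζ‖ = 1 → ‖G.eval ζ‖ ≤ 1) (c : ℂ) (hc : 1 < ‖c‖) (ζ : ℂ) (hζ : ‖ζ‖ = 1) :
    (ζ * (derivative G).eval ζ / (G.eval ζ - c)).re ≤ n := by
  have hball : ∀ z : ℂ, ‖z‖ ≤ 1 → ‖G.eval z‖ ≤ 1 := by
    intro z hz
    refine Complex.norm_le_of_forall_mem_frontier_norm_le (U := Metric.ball (0:ℂ) 1)
      (f := fun z => G.eval z) Metric.isBounded_ball
      (G.differentiable.diffContOnCl) ?_ ?_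
    · intro w hw
      rw [frontier_ball _ one_ne_zero] at hw
      exact hb w (by simpa using hw)
    · rw [closure_ball _ one_ne_zero]; simpa using hz
  set F := G - C c with hF
  have hroot : ∀ z ∈ F.roots, 1 < ‖z‖ := by
    intro z hz
    by_contra hcon
    have h0 := (mem_roots'.1 hz).2
    simp only [IsRoot.def, hF, eval_sub, eval_C, sub_eq_zero] at h0
    have := hball z (not_lt.1 hcon)
    rw [h0] at this; linarith
  have hF0 : F.eval ζ ≠ 0 := by
    intro h0
    simp only [hF, eval_sub, eval_C, sub_eq_zero] at h0
    have := hball ζ hζ.le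
    rw [h0] at this; linarith
  have key := (IsAlgClosed.splits F).eval_derivative_div_eval_of_ne_zero hF0
  have hd : derivative F = derivative G := by simp [hF]
  have he : F.eval ζ = G.eval ζ - c := by simp [hF]
  rw [hd, he] at key
  rw [mul_div_assoc, key]
  have gen : ∀ s : Multiset ℂ, (∀ z ∈ s, 1 < ‖z‖) →
      (ζ * (s.map (fun z => 1 / (ζ - z))).sum).re ≤ (s.card : ℝ) / 2 := by
    intro s
    induction s using Multiset.induction_on with
    | empty => simp
    | cons z s ih =>
      intro hs
      have h1 := ih (fun w hw => hs w (Multiset.mem_cons_of_mem hw))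
      have h2 := re_div_le ζ z hζ (hs z (Multiset.mem_cons_self z s))
      rw [Multiset.map_cons, Multiset.sum_cons, mul_add, Complex.add_re, Multiset.card_cons]
      rw [mul_one_div]
      push_cast
      linarith
  refine (gen _ hroot).trans ?_
  have h3 : F.roots.card ≤ 2 * n := (card_roots' F).trans (by
    rw [hF]; exact (natDegree_sub_C (p := G) (a := c)).trans_le hG)
  have h4 : (F.roots.card : ℝ) ≤ 2 * n := by exact_mod_cast h3
  linarith

lemma bernstein_ineq (p : ℝ[X]) (n : ℕ) (hn : p.natDegree ≤ n) (A B T : ℝ) (hA : A < T) (hB : T < B)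
    (hb : ∀ x ∈ Icc A B, |p.eval x| ≤ 1) :
    |(derivative p).eval T| * √((T - A) * (B - T)) ≤ n := by
  set m := (A + B) / 2 with hm
  set r := (B - A) / 2 with hr
  have hr0 : 0 < r := by rw [hr]; linarith
  obtain ⟨G, hGd, hGe⟩ := bern_poly p n hn m r
  set P := p.map Complex.ofRealHom with hP
  have hPr : ∀ x : ℝ, P.eval (x : ℂ) = (p.eval x : ℝ) := by
    intro x; exact eval_map_apply (f := Complex.ofRealHom) (p := p) x
  have hPd : ∀ x : ℝ, (derivative P).eval (x : ℂ) = ((derivative p).eval x : ℝ) := by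
    intro x; rw [hP, derivative_map]; exact eval_map_apply (f := Complex.ofRealHom) x
  have hinv : ∀ ζ : ℂ, ‖ζ‖ = 1 → ζ⁻¹ = (starRingEnd ℂ) ζ := by
    intro ζ h; exact Complex.inv_eq_conj h
  have hGb : ∀ ζ : ℂ, ‖ζ‖ = 1 → ‖G.eval ζ‖ ≤ 1 := by
    intro ζ h
    have h0 : ζ ≠ 0 := by rintro rfl; simp at h
    rw [hGe ζ h0, hinv ζ h, Complex.add_conj, norm_mul, norm_pow, h, one_pow, one_mul]
    have e : (m + r * ((2 * ζ.re : ℝ) : ℂ) / 2 : ℂ) = ((m + r * ζ.re : ℝ) : ℂ) := by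
      push_cast; ring
    rw [e, hPr, Complex.norm_real]
    apply hb
    have := abs_le.1 ((Complex.abs_re_le_norm ζ).trans h.le)
    constructor <;> nlinarith
  set c := (T - m) / r with hc
  set s := √((T - A) * (B - T)) / r with hs
  have hs2 : c ^ 2 + s ^ 2 = 1 := by
    have e0 : √((T - A) * (B - T)) ^ 2 = (T - A) * (B - T) := Real.sq_sqrt (by nlinarith)
    rw [hc, hs, div_pow (T - m), div_pow (√((T - A) * (B - T))), e0, ← add_div,
      div_eq_one_iff_eq (by positivity)]
    rw [hm, hr]; ring
  set ζ : ℂ := ⟨c, s⟩ with hζ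
  have hζ1 : ‖ζ‖ = 1 := by
    rw [← sq_eq_sq₀ (norm_nonneg _) zero_le_one, ← Complex.normSq_eq_norm_sq, Complex.normSq_apply]
    simp [hζ]; linarith
  have hζ0 : ζ ≠ 0 := by intro h; rw [h] at hζ1; simp at hζ1
  have hζi : ζ⁻¹ = ⟨c, -s⟩ := by rw [hinv ζ hζ1]; rfl
  have hpt : (m + r * (ζ + ζ⁻¹) / 2 : ℂ) = (T : ℝ) := by
    rw [hζi, hζ]
    apply Complex.ext
    · simp; rw [hc]; field_simp; ring
    · simp
  have hdif : (r * (1 - ζ⁻¹ ^ 2) / 2 * ζ : ℂ) = Complex.I * (r * s : ℝ) := by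
    have : (r * (1 - ζ⁻¹ ^ 2) / 2 * ζ : ℂ) = r * (ζ - ζ⁻¹) / 2 := by field_simp
    rw [this, hζi, hζ]
    apply Complex.ext
    · simp
    · simp; ring
  set f := p.eval T with hf
  set d := (derivative p).eval T with hd
  have hder : (derivative G).eval ζ = n * ζ ^ (n - 1) * P.eval ((T : ℝ) : ℂ) +
      ζ ^ n * ((derivative P).eval ((T : ℝ) : ℂ) * (r * (1 - ζ⁻¹ ^ 2) / 2)) := by
    have h1 : HasDerivAt (fun z => G.eval z) ((derivative G).eval ζ) ζ := G.hasDerivAt ζ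
    have h2 : HasDerivAt (fun z : ℂ => (m + r * (z + z⁻¹) / 2 : ℂ)) (r * (1 - ζ⁻¹ ^ 2) / 2) ζ := by
      have := ((((hasDerivAt_id ζ).add (hasDerivAt_inv hζ0)).const_mul (r : ℂ)).div_const 2).const_add (m : ℂ)
      rw [inv_pow, sub_eq_add_neg]
      exact this
    have h3 : HasDerivAt (fun z : ℂ => P.eval (m + r * (z + z⁻¹) / 2 : ℂ))
        ((derivative P).eval ((T : ℝ) : ℂ) * (r * (1 - ζ⁻¹ ^ 2) / 2)) ζ := by
      have := (P.hasDerivAt (m + r * (ζ + ζ⁻¹) / 2 : ℂ)).comp ζ h2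
      rw [hpt] at this
      exact this
    have h4 := (hasDerivAt_pow n ζ).mul h3
    rw [hpt] at h4
    refine h1.unique (h4.congr_of_eventuallyEq ?_)
    filter_upwards [isOpen_ne.mem_nhds hζ0] with z hz
    exact hGe z hz
  have hmul : ζ * (derivative G).eval ζ = ζ ^ n * (n * f + Complex.I * (r * s * d : ℝ)) := by
    rw [hder, hPr, hPd, ← hf, ← hd]
    have e2 : (n : ℂ) * ζ ^ (n - 1) * ζ = n * ζ ^ n := by
      rcases n with _ | n
      · simp
      · rw [Nat.add_sub_cancel, pow_succ]; ring
    calc _ = (n : ℂ) * ζ ^ (n - 1) * ζ * f + ζ ^ n * (d * (r * (1 - ζ⁻¹ ^ 2) / 2 * ζ)) := by ring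
      _ = _ := by rw [e2, hdif]; push_cast; ring
  have hGv : G.eval ζ = ζ ^ n * f := by rw [hGe ζ hζ0, hpt, hPr]
  set σ := r * s * d with hσ
  have hrs : r * s = √((T - A) * (B - T)) := by rw [hs]; field_simp
  have key : ∀ q : ℝ, 1 < |q| → -σ * q ≤ n * q ^ 2 := by
    intro q hq
    have hq0 : q ≠ 0 := by rintro rfl; simp at hq; linarith
    have := bern_re G n hGd hGb (ζ ^ n * (Complex.I * q)) (by simp [hζ1, hq]) ζ hζ1
    rw [hmul, hGv, ← mul_sub, mul_div_mul_left _ _ (pow_ne_zero n hζ0)] at this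
    have hpos : 0 < Complex.normSq ((f : ℂ) - Complex.I * q) := by
      apply Complex.normSq_pos.2
      intro h
      have := congrArg Complex.im h
      simp at this
      exact hq0 this
    rw [Complex.div_re, ← add_div, div_le_iff₀ hpos] at this
    simp [Complex.normSq_apply] at this
    nlinarith
  have fin : |σ| ≤ n := by
    by_contra hcon
    push Not at hcon
    have hn0 : (0:ℝ) ≤ n := Nat.cast_nonneg n
    -- choose t in (1, ·) with n t < |σ|
    obtain ⟨t, ht1, ht2⟩ : ∃ t : ℝ, 1 < t ∧ n * t < |σ| := by
      refine ⟨1 + (|σ| - n) / (2 * (n + 1)), ?_, ?_⟩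
      · have : 0 < (|σ| - n) / (2 * (n + 1)) := by apply div_pos <;> linarith
        linarith
      · have : n * ((|σ| - n) / (2 * (n + 1))) < |σ| - n := by
          rw [← mul_div_assoc, div_lt_iff₀ (by positivity)]; nlinarith
        linarith
    rcases le_total 0 σ with h | h
    · have := key (-t) (by rw [abs_neg, abs_of_pos (by linarith)]; exact ht1)
      rw [abs_of_nonneg h] at ht2
      nlinarith
    · have := key t (by rw [abs_of_pos (by linarith)]; exact ht1)
      rw [abs_of_nonpos h] at ht2
      nlinarith
  rw [hσ, hrs, abs_mul, abs_of_nonneg (Real.sqrt_nonneg _)] at fin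
  linarith

/-- The normalised polynomial `∏ (1 - X / y)`. -/
noncomputable def fpoly (s : Multiset ℝ) : ℝ[X] := (s.map fun y => (1 - C y⁻¹ * X : ℝ[X])).prod

lemma fpoly_cons (y : ℝ) (s : Multiset ℝ) : fpoly (y ::ₘ s) = (1 - C y⁻¹ * X) * fpoly s := by
  simp [fpoly]

lemma fpoly_add (s t : Multiset ℝ) : fpoly (s + t) = fpoly s * fpoly t := by
  simp [fpoly]

lemma fpoly_eval (s : Multiset ℝ) (t : ℝ) :
    (fpoly s).eval t = (s.map fun y => 1 - t / y).prod := by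
  induction s using Multiset.induction_on with
  | empty => simp [fpoly]
  | cons y s ih =>
    rw [fpoly_cons, eval_mul, ih, Multiset.map_cons, Multiset.prod_cons]
    simp [div_eq_inv_mul]

lemma fpoly_natDegree (s : Multiset ℝ) : (fpoly s).natDegree ≤ s.card := by
  induction s using Multiset.induction_on with
  | empty => simp [fpoly]
  | cons y s ih =>
    rw [fpoly_cons, Multiset.card_cons, add_comm]
    refine natDegree_mul_le.trans (add_le_add ?_ ih)
    compute_degree

lemma fpoly_deriv_cons (z : ℝ) (s : Multiset ℝ) (T : ℝ) :
    (derivative (fpoly (z ::ₘ s))).eval T =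
      -z⁻¹ * (fpoly s).eval T + (1 - T / z) * (derivative (fpoly s)).eval T := by
  rw [fpoly_cons, derivative_mul]
  simp [div_eq_inv_mul]

lemma fpoly_deriv (s : Multiset ℝ) (T : ℝ) (h0 : ∀ y ∈ s, y ≠ 0) (hT : T ∉ s) :
    (derivative (fpoly s)).eval T =
      (fpoly s).eval T * (s.map fun y => 1 / (T - y)).sum := by
  induction s using Multiset.induction_on with
  | empty => simp [fpoly]
  | cons y s ih =>
    have hy : y ≠ 0 := h0 y (by simp)
    have hTy : T - y ≠ 0 := by
      intro h; apply hT; rw [sub_eq_zero.1 h]; simp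
    rw [fpoly_deriv_cons, ih (fun w hw => h0 w (by simp [hw])) (fun h => hT (by simp [h])),
      fpoly_cons, eval_mul, Multiset.map_cons, Multiset.sum_cons]
    have : -y⁻¹ = (1 - y⁻¹ * T) * (1 / (T - y)) := by field_simp; ring
    rw [this]
    simp only [eval_sub, eval_one, eval_mul, eval_C, eval_X]
    rw [div_eq_inv_mul T y]
    ring

/-- Special zero estimate. -/
lemma special_zero (z T : ℝ) (s : Multiset ℝ) (hT : 0 < T) (hz : 0 < z) (hs : ∀ y ∈ s, 0 < y)
    (hTs : T ∉ s)
    (hcase : z = T ∨ (z < T ∧ (∀ y ∈ s, y ≤ z ∨ T < y) ∧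
        0 < 1 / (T - z) + (s.map fun y => 1 / (T - y)).sum) ∨
      (T < z ∧ (∀ y ∈ s, y < T ∨ z ≤ y) ∧
        1 / (T - z) + (s.map fun y => 1 / (T - y)).sum < 0)) :
    |(derivative (fpoly (z ::ₘ s))).eval T| ≤
      ((z ::ₘ s).map fun y => 1 / y).sum * (s.map fun y => |1 - T / y|).prod := by
  have hprod : (s.map fun y => |1 - T / y|).prod = |(fpoly s).eval T| := by
    rw [fpoly_eval]
    clear * -
    induction s using Multiset.induction_on with
    | empty => simp
    | cons y s ih => simp only [Multiset.map_cons, Multiset.prod_cons, abs_mul, ih]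
  rw [fpoly_deriv_cons, fpoly_deriv s T (fun y hy => (hs y hy).ne') hTs, hprod]
  set g := (fpoly s).eval T
  set σ := (s.map fun y => 1 / (T - y)).sum with hσ
  have e1 : -z⁻¹ * g + (1 - T / z) * (g * σ) = (-z⁻¹ + (1 - T / z) * σ) * g := by ring
  rw [e1, abs_mul]
  refine mul_le_mul_of_nonneg_right ?_ (abs_nonneg _)
  rw [Multiset.map_cons, Multiset.sum_cons]
  have hnn : 0 ≤ (s.map fun y => 1 / y).sum := by
    apply Multiset.sum_nonneg
    intro x hx
    obtain ⟨y, hy, rfl⟩ := Multiset.mem_map.1 hx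
    have := hs y hy; positivity
  have hmono : ∀ c : ℝ, (∀ y ∈ s, c * (1 / (T - y)) ≤ 1 / y) → c * σ ≤ (s.map fun y => 1 / y).sum := by
    intro c hc
    rw [hσ, ← Multiset.sum_map_mul_left]
    exact Multiset.sum_map_le_sum_map _ _ hc
  rcases hcase with h | ⟨h, hy, hpos⟩ | ⟨h, hy, hneg⟩
  · subst h
    rw [div_self hz.ne', sub_self, zero_mul, add_zero, abs_neg, abs_of_pos (by positivity), one_div]
    linarith
  · have hTz : 0 < T - z := by linarith
    have e : -z⁻¹ + (1 - T / z) * σ = -((T - z) / z * (1 / (T - z) + σ)) := by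
      field_simp; ring
    have e2 : (T - z) / z * (1 / (T - z) + σ) = 1 / z + (T - z) / z * σ := by
      field_simp
    rw [e, abs_neg, abs_of_pos (by positivity), e2]
    refine add_le_add le_rfl (hmono _ fun y hyy => ?_)
    have hy0 := hs y hyy
    rcases hy y hyy with h1 | h1
    · have : 0 < T - y := by linarith
      rw [div_mul_div_comm, mul_one, div_le_div_iff₀ (by positivity) hy0]
      nlinarith
    · have : 1 / (T - y) < 0 := one_div_neg.2 (by linarith)
      have h3 : 0 < (T - z) / z := by positivity
      have h4 : 0 < 1 / y := by positivity
      nlinarith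
  · have hTz : 0 < z - T := by linarith
    have hTz' : T - z ≠ 0 := by linarith
    have e : -z⁻¹ + (1 - T / z) * σ = (z - T) / z * (1 / (T - z) + σ) := by
      field_simp; ring
    have e2 : -((z - T) / z * (1 / (T - z) + σ)) = 1 / z + -((z - T) / z) * σ := by
      field_simp; ring
    have h3 : 0 < (z - T) / z := by positivity
    rw [e, abs_of_neg (mul_neg_of_pos_of_neg h3 hneg), e2]
    refine add_le_add le_rfl (hmono _ fun y hyy => ?_)
    have hy0 := hs y hyy
    rcases hy y hyy with h1 | h1
    · have : 0 < 1 / (T - y) := one_div_pos.2 (by linarith)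
      have h4 : 0 < 1 / y := by positivity
      nlinarith
    · have h5 : 0 < y - T := by linarith
      have : -((z - T) / z) * (1 / (T - y)) = (z - T) / (z * (y - T)) := by
        have : T - y ≠ 0 := by linarith
        field_simp
        ring
      rw [this, div_le_div_iff₀ (by positivity) hy0]
      nlinarith

lemma merge (s : Multiset ℝ) (hs : ∀ e ∈ s, 0 ≤ e ∧ e ≤ 1) :
    ∃ (k : ℕ) (φ : ℝ), 0 ≤ φ ∧ φ ≤ 1 ∧ k + φ = s.sum ∧ ∀ w : ℝ, -1 ≤ w →
      0 ≤ (1 + w) ^ k * (1 + φ * w) ∧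
      (1 + w) ^ k * (1 + φ * w) ≤ (s.map fun e => 1 + e * w).prod := by
  induction s using Multiset.induction_on with
  | empty => exact ⟨0, 0, by norm_num, by norm_num, by simp, by intro w _; simp⟩
  | cons e s ih =>
    obtain ⟨k, φ, h0, h1, hk, hw⟩ := ih (fun x hx => hs x (by simp [hx]))
    obtain ⟨he0, he1⟩ := hs e (by simp)
    have pos : ∀ a w : ℝ, 0 ≤ a → a ≤ 1 → -1 ≤ w → 0 ≤ 1 + a * w := by
      intro a w h h' h''; nlinarith
    by_cases hc : e + φ ≤ 1
    · refine ⟨k, e + φ, by linarith, hc, ?_, fun w hww => ?_⟩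
      · rw [Multiset.sum_cons, ← hk]; ring
      · have hp : 0 ≤ (1 + w) ^ k := pow_nonneg (by linarith) k
        refine ⟨mul_nonneg hp (pos _ _ (by linarith) hc hww), ?_⟩
        rw [Multiset.map_cons, Multiset.prod_cons]
        calc (1 + w) ^ k * (1 + (e + φ) * w) ≤ (1 + w) ^ k * ((1 + e * w) * (1 + φ * w)) := by
              refine mul_le_mul_of_nonneg_left ?_ hp
              have : 0 ≤ e * φ * w ^ 2 := by positivity
              nlinarith
          _ = (1 + e * w) * ((1 + w) ^ k * (1 + φ * w)) := by ring
          _ ≤ _ := mul_le_mul_of_nonneg_left (hw w hww).2 (pos _ _ he0 he1 hww)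
    · refine ⟨k + 1, e + φ - 1, by linarith, by linarith, ?_, fun w hww => ?_⟩
      · rw [Multiset.sum_cons, ← hk]; push_cast; ring
      · have hp : 0 ≤ (1 + w) ^ k := pow_nonneg (by linarith) k
        refine ⟨mul_nonneg (pow_nonneg (by linarith) _)
          (pos _ _ (by linarith) (by linarith) hww), ?_⟩
        rw [Multiset.map_cons, Multiset.prod_cons]
        calc (1 + w) ^ (k + 1) * (1 + (e + φ - 1) * w)
            = (1 + w) ^ k * ((1 + w) * (1 + (e + φ - 1) * w)) := by ring
          _ ≤ (1 + w) ^ k * ((1 + e * w) * (1 + φ * w)) := by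
              refine mul_le_mul_of_nonneg_left ?_ hp
              have : 0 ≤ (1 - e) * (1 - φ) * w ^ 2 :=
                mul_nonneg (mul_nonneg (by linarith) (by linarith)) (sq_nonneg w)
              nlinarith
          _ = (1 + e * w) * ((1 + w) ^ k * (1 + φ * w)) := by ring
          _ ≤ _ := mul_le_mul_of_nonneg_left (hw w hww).2 (pos _ _ he0 he1 hww)

lemma bern_merge (near far : Multiset ℝ) (T : ℝ) (hT : 0 < T)
    (hfar : ∀ y ∈ far, 2 * T ≤ y)
    (hb : ∀ x ∈ Icc 0 (2 * T), |(fpoly (near + far)).eval x| ≤ 1) :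
    |(derivative (fpoly (near + far))).eval T| * T ≤
      near.card + (far.map fun y => T / (y - T)).sum + 1 := by
  obtain ⟨k, φ, h0, h1, hk, hw⟩ := merge (far.map fun y => T / (y - T)) (by
    intro e he
    obtain ⟨y, hy, rfl⟩ := Multiset.mem_map.1 he
    have := hfar y hy
    have h2 : 0 < y - T := by linarith
    exact ⟨by positivity, by rw [div_le_one h2]; linarith⟩)
  set R := (fpoly far).eval T with hR
  have hR0 : 0 ≤ R := by
    rw [hR, fpoly_eval]
    apply Multiset.prod_nonneg
    intro x hx
    obtain ⟨y, hy, rfl⟩ := Multiset.mem_map.1 hx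
    have := hfar y hy
    have : T / y ≤ 1 := by rw [div_le_one (by linarith)]; linarith
    linarith
  have hfe : ∀ t : ℝ, (fpoly far).eval t =
      R * ((far.map fun y => T / (y - T)).map fun e => 1 + e * ((T - t) / T)).prod := by
    intro t
    rw [hR, fpoly_eval, fpoly_eval, Multiset.map_map, ← Multiset.prod_map_mul]
    congr 1
    refine Multiset.map_congr rfl fun y hy => ?_
    have := hfar y hy
    have h2 : y - T ≠ 0 := by linarith
    have h3 : y ≠ 0 := by linarith
    simp only [Function.comp]
    field_simp
    ring
  set W : ℝ[X] := 1 - C T⁻¹ * X with hW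
  set Q : ℝ[X] := C R * ((1 + W) ^ k * (1 + C φ * W)) with hQ
  clear_value Q
  have hWe : ∀ t, W.eval t = (T - t) / T := by
    intro t; simp [hW]; field_simp
  have hWd : W.natDegree ≤ 1 := by rw [hW]; compute_degree
  have hQd : Q.natDegree ≤ k + 1 := by
    rw [hQ]
    refine (natDegree_C_mul_le _ _).trans (natDegree_mul_le.trans (add_le_add ?_ ?_))
    · have : (1 + W).natDegree ≤ 1 := (natDegree_add_le _ _).trans (by simp [hWd])
      simpa using natDegree_pow_le_of_le k this
    · refine (natDegree_add_le _ _).trans ?_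
      simp only [natDegree_one, zero_le, sup_of_le_right]
      exact (natDegree_C_mul_le _ _).trans hWd
  have hQe : ∀ t, Q.eval t = R * ((1 + (T - t) / T) ^ k * (1 + φ * ((T - t) / T))) := by
    intro t; simp [hQ, hWe]
  have hder : (derivative (fpoly near * Q)).eval T = (derivative (fpoly (near + far))).eval T := by
    have hW' : derivative W = - C T⁻¹ := by simp [hW]
    have hQT : Q.eval T = R := by rw [hQe]; simp
    have hQ'T : (derivative Q).eval T = (derivative (fpoly far)).eval T := by
      rw [fpoly_deriv far T (fun y hy => by have := hfar y hy; linarith)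
        (fun h => by have := hfar T h; linarith), ← hR]
      have e : (far.map fun y => 1 / (T - y)).sum = (-T⁻¹) * (far.map fun y => T / (y - T)).sum := by
        rw [← Multiset.sum_map_mul_left]
        congr 1
        refine Multiset.map_congr rfl fun y hy => ?_
        have := hfar y hy
        have h2 : y - T ≠ 0 := by linarith
        have h3 : T - y ≠ 0 := by linarith
        field_simp
        ring
      rw [e, ← hk, hQ]
      simp [derivative_mul, derivative_pow, hW', hWe]
      ring
    rw [fpoly_add, derivative_mul, derivative_mul, eval_add, eval_add, eval_mul, eval_mul, eval_mul,
      eval_mul, hQT, hQ'T]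
  have hB := bernstein_ineq (fpoly near * Q) (near.card + (k + 1))
    (natDegree_mul_le.trans (add_le_add (fpoly_natDegree near) hQd)) 0 (2 * T) T hT (by linarith) (by
      intro x hx
      refine le_trans ?_ (hb x hx)
      rw [fpoly_add, eval_mul, eval_mul, abs_mul, abs_mul]
      refine mul_le_mul_of_nonneg_left ?_ (abs_nonneg _)
      have hww := hw ((T - x) / T) (by rw [le_div_iff₀ hT]; linarith [hx.2])
      rw [hQe, hfe]
      have p1 := mul_nonneg hR0 hww.1
      have p2 := mul_le_mul_of_nonneg_left hww.2 hR0
      rw [abs_of_nonneg p1, abs_of_nonneg (p1.trans p2)]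
      exact p2)
  have : √((T - 0) * (2 * T - T)) = T := by
    rw [show (T - 0) * (2 * T - T) = T * T by ring]; exact Real.sqrt_mul_self hT.le
  rw [hder, this] at hB
  rw [← hk]
  push_cast at hB
  linarith

lemma prod_abs_exp (s : Multiset ℝ) (T : ℝ) (h : ℝ → ℝ)
    (hh : ∀ y ∈ s, |1 - T / y| ≤ Real.exp (h y)) (h1 : 1 ≤ (s.map fun y => |1 - T / y|).prod) :
    0 ≤ (s.map h).sum := by
  have : (s.map fun y => |1 - T / y|).prod ≤ Real.exp ((s.map h).sum) := by
    clear h1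
    induction s using Multiset.induction_on with
    | empty => simp
    | cons y s ih =>
      rw [Multiset.map_cons, Multiset.map_cons, Multiset.prod_cons, Multiset.sum_cons, Real.exp_add]
      refine mul_le_mul (hh y (by simp)) (ih fun w hw => hh w (by simp [hw])) ?_ (Real.exp_pos _).le
      apply Multiset.prod_nonneg
      intro x hx
      obtain ⟨y, hy, rfl⟩ := Multiset.mem_map.1 hx
      exact abs_nonneg _
  exact Real.one_le_exp_iff.1 (h1.trans this)

/-- Sum of a two-valued function -/
lemma sum_two (s : Multiset ℝ) (T u v : ℝ) (hT : T ∉ s) :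
    (s.map fun y => if y < T then u else v).sum =
      (s.countP (· < T) : ℝ) * u + (s.countP (T < ·) : ℝ) * v := by
  induction s using Multiset.induction_on with
  | empty => simp
  | cons y s ih =>
    rw [Multiset.map_cons, Multiset.sum_cons, ih (fun h => hT (by simp [h])), Multiset.countP_cons,
      Multiset.countP_cons]
    have hne : y ≠ T := fun h => hT (by simp [h])
    rcases lt_or_gt_of_ne hne with h | h
    · simp [h, h.le.not_gt]; ring
    · simp [h, not_lt.2 h.le]; ring

lemma caseA (z T : ℝ) (s : Multiset ℝ) (hT : 0 < T) (hz : 0 < z) (hs : ∀ y ∈ s, 0 < y)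
    (hTs : T ∉ s) (h1 : 1 ≤ (s.map fun y => |1 - T / y|).prod)
    (hb : ∀ x ∈ Icc 0 (2 * T), |(fpoly (z ::ₘ s)).eval x| ≤ 1)
    (hl : 2 ≤ s.countP (· < T)) :
    |(derivative (fpoly (z ::ₘ s))).eval T| < ((z ::ₘ s).map fun y => 1 / y).sum := by
  set e : ℝ → ℝ := fun y => if y < 2 * T then 1 else T / (y - T) with he
  have step : |(derivative (fpoly (z ::ₘ s))).eval T| * T ≤ ((z ::ₘ s).map e).sum + 1 := by
    set S := z ::ₘ s
    have hS := Multiset.filter_add_not (fun y => y < 2 * T) S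
    have hsum : (S.map e).sum = (S.filter fun y => y < 2 * T).card +
        ((S.filter fun y => ¬ y < 2 * T).map fun y => T / (y - T)).sum := by
      conv_lhs => rw [← hS]
      rw [Multiset.map_add, Multiset.sum_add]
      congr 1
      · rw [Multiset.map_congr rfl (g := fun _ => (1:ℝ))]
        · simp
        · intro y hy
          simp [he, (Multiset.mem_filter.1 hy).2]
      · congr 1
        refine Multiset.map_congr rfl fun y hy => ?_
        simp only [he, if_neg (Multiset.mem_filter.1 hy).2]
    rw [hsum]
    have := bern_merge (S.filter fun y => y < 2 * T) (S.filter fun y => ¬ y < 2 * T) T hT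
      (fun y hy => not_lt.1 (Multiset.mem_filter.1 hy).2) (by rw [hS]; exact hb)
    rw [hS] at this
    exact this
  set h : ℝ → ℝ := fun y => if y < T then T / y - 2 else - (T / y) with hh
  have hsum := prod_abs_exp s T h (by
    intro y hy
    have hy0 := hs y hy
    simp only [hh]
    split_ifs with hlt
    · have : 1 < T / y := by rwa [one_lt_div hy0]
      rw [abs_of_neg (by linarith)]
      linarith [Real.add_one_le_exp (T / y - 2)]
    · have : T / y ≤ 1 := by rw [div_le_one hy0]; linarith
      rw [abs_of_nonneg (by linarith)]
      linarith [Real.add_one_le_exp (-(T / y))]) h1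
  have hle : (s.map e).sum ≤ (s.map fun y => T * (1 / y) - h y - (if y < T then 1 else 0)).sum := by
    refine Multiset.sum_map_le_sum_map _ _ fun y hy => ?_
    have hy0 := hs y hy
    have hyT : y ≠ T := fun h => hTs (h ▸ hy)
    simp only [he, hh]
    rw [mul_one_div]
    by_cases c1 : y < T
    · rw [if_pos c1, if_pos c1, if_pos (by linarith)]; linarith
    · have c2 : T < y := lt_of_le_of_ne (not_lt.1 c1) (Ne.symm hyT)
      rw [if_neg c1, if_neg c1]
      split_ifs with c3
      · have : 1 ≤ 2 * T / y := by rw [le_div_iff₀ hy0]; linarith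
        have e3 : 2 * T / y = T / y + T / y := by ring
        linarith
      · have : T / (y - T) ≤ 2 * T / y := by
          rw [div_le_div_iff₀ (by linarith) hy0]; nlinarith
        have e3 : 2 * T / y = T / y + T / y := by ring
        linarith
  rw [Multiset.sum_map_sub, Multiset.sum_map_sub, Multiset.sum_map_mul_left, sum_two s T 1 0 hTs] at hle
  have hl' : (2:ℝ) ≤ (s.countP (· < T) : ℝ) := by exact_mod_cast hl
  have hez : e z ≤ 1 := by
    simp only [he]
    split_ifs with c
    · exact le_rfl
    · rw [div_le_one (by linarith)]; linarith
  rw [Multiset.map_cons, Multiset.sum_cons] at step ⊢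
  have hz' : 0 < T * (1 / z) := by positivity
  have : |(derivative (fpoly (z ::ₘ s))).eval T| * T < (1 / z + (s.map fun y => 1 / y).sum) * T := by
    nlinarith
  exact lt_of_mul_lt_mul_right this hT.le

lemma caseB (z T B : ℝ) (s : Multiset ℝ) (hT : 0 < T) (hz : 0 < z) (hzB : z ≤ B)
    (hs : ∀ y ∈ s, 0 < y) (hsB : ∀ y ∈ s, y ≤ B) (hTB : T < B) (hB2 : B < 2 * T)
    (hTs : T ∉ s) (h1 : 1 ≤ (s.map fun y => |1 - T / y|).prod)
    (hb : ∀ x ∈ Icc 0 B, |(fpoly (z ::ₘ s)).eval x| ≤ 1)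
    (hl : 2 ≤ s.countP (· < T)) (hlr : s.countP (· < T) ≤ s.countP (T < ·))
    (hcard : s.card = s.countP (· < T) + s.countP (T < ·)) :
    |(derivative (fpoly (z ::ₘ s))).eval T| < ((z ::ₘ s).map fun y => 1 / y).sum := by
  have hBT : 0 < B - T := by linarith
  have hB0 : 0 < B := by linarith
  have bern := bernstein_ineq (fpoly (z ::ₘ s)) _ (fpoly_natDegree _) 0 B T hT hTB hb
  rw [Multiset.card_cons, hcard] at bern
  push_cast at bern
  set l : ℝ := (s.countP (· < T) : ℝ) with hldef
  set r : ℝ := (s.countP (T < ·) : ℝ) with hrdef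
  have hl' : (2:ℝ) ≤ l := by rw [hldef]; exact_mod_cast hl
  have hlr' : l ≤ r := by rw [hldef, hrdef]; exact_mod_cast hlr
  set L := B / (B - T) with hL
  have hL1 : 1 < L := by rw [hL, one_lt_div hBT]; linarith
  have hL0 : 0 < L := by linarith
  set h : ℝ → ℝ := fun y => if y < T then Real.log L + (T / y - 1) / L - 1 else - Real.log L with hh
  have hsum := prod_abs_exp s T h (by
    intro y hy
    have hy0 := hs y hy
    have hyB := hsB y hy
    simp only [hh]
    split_ifs with hlt
    · have : 1 < T / y := by rwa [one_lt_div hy0]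
      rw [abs_of_neg (by linarith), add_sub_assoc, Real.exp_add, Real.exp_log hL0]
      have := Real.add_one_le_exp ((T / y - 1) / L - 1)
      have h3 := mul_le_mul_of_nonneg_left this hL0.le
      have : L * ((T / y - 1) / L - 1 + 1) = T / y - 1 := by field_simp; ring
      linarith
    · have : T / y ≤ 1 := by rw [div_le_one hy0]; linarith
      rw [abs_of_nonneg (by linarith), Real.exp_neg, Real.exp_log hL0, hL, inv_div]
      have e : (B - T) / B = 1 - T / B := by field_simp
      rw [e]
      have : T / B ≤ T / y := by gcongr
      linarith) h1
  have hle : (s.map fun y => L * h y + (if y < T then L * (1 - Real.log L) + 1 else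
      L * Real.log L + T / B)).sum ≤ (s.map fun y => T * (1 / y)).sum := by
    refine Multiset.sum_map_le_sum_map _ _ fun y hy => ?_
    have hy0 := hs y hy
    have hyB := hsB y hy
    simp only [hh]
    rw [mul_one_div]
    split_ifs with c1
    · have : L * (Real.log L + (T / y - 1) / L - 1) = L * Real.log L + (T / y - 1) - L := by field_simp
      rw [this]; linarith
    · have : T / B ≤ T / y := by gcongr
      linarith
  rw [Multiset.sum_map_add, Multiset.sum_map_mul_left, Multiset.sum_map_mul_left, sum_two s T _ _ hTs,
    ← hldef, ← hrdef] at hle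
  have hlog : L - 1 ≤ L * Real.log L := by
    have := Real.one_sub_inv_le_log_of_pos hL0
    have := mul_le_mul_of_nonneg_left this hL0.le
    have e : L * (1 - L⁻¹) = L - 1 := by field_simp
    linarith
  have hLh : 0 ≤ L * (s.map h).sum := mul_nonneg hL0.le hsum
  rw [Multiset.map_cons, Multiset.sum_cons]
  have hzT : T / B ≤ T * (1 / z) := by rw [mul_one_div]; gcongr
  have hlog2 := mul_le_mul_of_nonneg_left hlog (sub_nonneg.2 hlr')
  have hK : l * (L + 1) + (r - l) * (L - 1) + (r + 1) * (T / B) ≤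
      (1 / z + (s.map fun y => 1 / y).sum) * T := by
    nlinarith

  set g := √(T / (B - T)) with hg
  have hg2 : g ^ 2 = T / (B - T) := Real.sq_sqrt (by positivity)
  have hg1 : 1 < g := by
    rw [hg, Real.lt_sqrt zero_le_one, one_pow, one_lt_div hBT]; linarith
  have hLg : L = 1 + g ^ 2 := by rw [hg2, hL]; field_simp; ring
  have hTBg : 1 / 2 ≤ T / B := by rw [le_div_iff₀ hB0]; linarith
  have hsq : √((T - 0) * (B - T)) * g = T := by
    rw [hg, ← Real.sqrt_mul (by nlinarith)]
    rw [show (T - 0) * (B - T) * (T / (B - T)) = T * T by field_simp; ring]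
    exact Real.sqrt_mul_self hT.le
  have hMT : |(derivative (fpoly (z ::ₘ s))).eval T| * T ≤ (l + r + 1) * g := by
    have := mul_le_mul_of_nonneg_right bern (by linarith : 0 ≤ g)
    rw [mul_assoc, hsq] at this
    exact this
  have hfin : (l + r + 1) * g < l * (L + 1) + (r - l) * (L - 1) + (r + 1) * (T / B) := by
    have h5 : (r + 1) * (1 / 2) ≤ (r + 1) * (T / B) :=
      mul_le_mul_of_nonneg_left hTBg (by linarith)
    rw [hLg]
    have h6 : 0 ≤ (l - 2) * ((g - 1) ^ 2 + 3 / 2) := mul_nonneg (by linarith) (by positivity)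
    have h7 : 0 ≤ (r - l) * (g * (g - 1) + 1 / 2) := mul_nonneg (by linarith) (by nlinarith)
    nlinarith [sq_nonneg (g - 1), sq_nonneg (g - 5 / 4)]
  have : |(derivative (fpoly (z ::ₘ s))).eval T| * T < (1 / z + (s.map fun y => 1 / y).sum) * T := by
    linarith
  exact lt_of_mul_lt_mul_right this hT.le

lemma poly_mvt (p : ℝ[X]) {x y : ℝ} (h : x < y) :
    ∃ c ∈ Ioo x y, p.eval y - p.eval x = (derivative p).eval c * (y - x) := by
  obtain ⟨c, hc, he⟩ := exists_hasDerivAt_eq_slope (fun t => p.eval t)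
    (fun t => (derivative p).eval t) h p.continuousOn (fun t _ => p.hasDerivAt t)
  refine ⟨c, hc, ?_⟩
  have : y - x ≠ 0 := by linarith
  rw [he]; field_simp

/-- Rolle's theorem, counted with multiplicity, on an order-connected set. -/
lemma rolle_count (p : ℝ[X]) (hp' : derivative p ≠ 0) (q : ℝ → Prop) [DecidablePred q]
    (hq : ∀ x y z, q x → q y → x < z → z < y → q z) :
    p.roots.countP q ≤ (derivative p).roots.countP q + 1 := by
  have hp : p ≠ 0 := ne_of_apply_ne derivative (by rwa [derivative_zero])
  rw [Multiset.countP_eq_card_filter, Multiset.countP_eq_card_filter]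
  set R := p.roots.filter q with hR
  set R' := (derivative p).roots.filter q with hR'
  have hcR : ∀ x ∈ R.toFinset, R.count x = p.rootMultiplicity x := by
    intro x hx
    rw [hR, Multiset.count_filter_of_pos, count_roots]
    exact (Multiset.mem_filter.1 (Multiset.mem_toFinset.1 hx)).2
  have hcR' : ∀ x ∈ R.toFinset, R'.count x = (derivative p).rootMultiplicity x := by
    intro x hx
    rw [hR', Multiset.count_filter_of_pos, count_roots]
    exact (Multiset.mem_filter.1 (Multiset.mem_toFinset.1 hx)).2
  have inter : R.toFinset.card ≤ (R'.toFinset \ R.toFinset).card + 1 := by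
    refine Finset.card_le_sdiff_of_interleaved fun x hx y hy hxy hxy' => ?_
    rw [Multiset.mem_toFinset, hR, Multiset.mem_filter, mem_roots hp] at hx hy
    obtain ⟨z, hz1, hz2⟩ := exists_deriv_eq_zero hxy p.continuousOn (hx.1.trans hy.1.symm)
    refine ⟨z, ?_, hz1⟩
    rw [Multiset.mem_toFinset, hR', Multiset.mem_filter, mem_roots hp', IsRoot, ← p.deriv]
    exact ⟨hz2, hq x y z hx.2 hy.2 hz1.1 hz1.2⟩
  calc
    Multiset.card R = ∑ x ∈ R.toFinset, R.count x :=
      (Multiset.toFinset_sum_count_eq _).symm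
    _ = ∑ x ∈ R.toFinset, (R.count x - 1 + 1) :=
      (Eq.symm <| Finset.sum_congr rfl fun _ hx => tsub_add_cancel_of_le <|
        Nat.succ_le_iff.2 <| Multiset.count_pos.2 <| Multiset.mem_toFinset.1 hx)
    _ = (∑ x ∈ R.toFinset, (R.count x - 1)) + R.toFinset.card := by
      simp only [Finset.sum_add_distrib, Finset.card_eq_sum_ones]
    _ ≤ (∑ x ∈ R.toFinset, R'.count x) + ((R'.toFinset \ R.toFinset).card + 1) := by
      refine add_le_add (Finset.sum_le_sum fun x hx => ?_) inter
      rw [hcR x hx, hcR' x hx]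
      exact rootMultiplicity_sub_one_le_derivative_rootMultiplicity _ _
    _ ≤ (∑ x ∈ R.toFinset, R'.count x) +
          ((∑ x ∈ R'.toFinset \ R.toFinset, R'.count x) + 1) := by
      rw [Finset.card_eq_sum_ones]
      gcongr with x hx
      rw [Nat.succ_le_iff, Multiset.count_pos, ← Multiset.mem_toFinset]
      exact (Finset.mem_sdiff.1 hx).1
    _ = Multiset.card R' + 1 := by
      rw [← add_assoc, ← Finset.sum_union Finset.disjoint_sdiff, Finset.union_sdiff_self_eq_union, ←
        Multiset.toFinset_sum_count_eq, ← Finset.sum_subset Finset.subset_union_right]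
      intro x _ hx₂
      simpa only [Multiset.mem_toFinset, Multiset.count_eq_zero] using hx₂

/-- A critical point outside of the root hull improves Rolle's count by one. -/
lemma rolle_extra (p : ℝ[X]) (hp' : derivative p ≠ 0) (q q' : ℝ → Prop) [DecidablePred q]
    [DecidablePred q'] (hq : ∀ x y z, q' x → q' y → x < z → z < y → q' z)
    (hqq : ∀ x ∈ p.roots, q x → q' x) (hqq' : ∀ x, q' x → q x)
    (ξ : ℝ) (hξ : (derivative p).eval ξ = 0) (h1 : q ξ) (h2 : ¬ q' ξ) :
    p.roots.countP q ≤ (derivative p).roots.countP q := by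
  have e1 : p.roots.countP q = p.roots.countP q' := by
    refine Multiset.countP_congr rfl fun x hx => ?_
    exact propext ⟨hqq x hx, hqq' x⟩
  have e2 := rolle_count p hp' q' hq
  have hmem : ξ ∈ (derivative p).roots := by rw [mem_roots hp']; exact hξ
  obtain ⟨t, ht⟩ := Multiset.exists_cons_of_mem hmem
  have e3 : t.countP q' ≤ t.countP q := by
    rw [Multiset.countP_eq_card_filter, Multiset.countP_eq_card_filter]
    exact Multiset.card_le_card (Multiset.monotone_filter_right t hqq')
  rw [ht, Multiset.countP_cons_of_neg _ h2] at e2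
  rw [e1, ht, Multiset.countP_cons_of_pos _ h1]
  omega

lemma exists_crit_right (p : ℝ[X]) (T y : ℝ) (hTy : T < y) (hy : p.eval y = 0)
    (hne : ∀ x ∈ Ico T y, p.eval x ≠ 0) (hpos : 0 < p.eval T * (derivative p).eval T) :
    ∃ ξ ∈ Ioo T y, (derivative p).eval ξ = 0 := by
  obtain ⟨c, hc, he⟩ := poly_mvt (p ^ 2) hTy
  have hT0 := hne T ⟨le_rfl, hTy⟩
  have hd : ∀ x, (derivative (p ^ 2)).eval x = 2 * (p.eval x * (derivative p).eval x) := by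
    intro x; rw [sq, derivative_mul]; simp; ring
  have hcneg : (derivative (p ^ 2)).eval c < 0 := by
    rw [eval_pow, eval_pow, hy] at he
    have : 0 < p.eval T ^ 2 := by positivity
    by_contra hcon
    have := mul_nonneg (not_lt.1 hcon) (sub_nonneg.2 hTy.le)
    linarith
  have hTpos : 0 < (derivative (p ^ 2)).eval T := by rw [hd]; linarith
  obtain ⟨ξ, hξ, h0⟩ := intermediate_value_Ioo' hc.1.le
    (f := fun x => (derivative (p ^ 2)).eval x) (derivative (p ^ 2)).continuousOn
    (⟨hcneg, hTpos⟩ : (0:ℝ) ∈ Ioo _ _)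
  refine ⟨ξ, ⟨hξ.1, hξ.2.trans hc.2⟩, ?_⟩
  simp only [hd] at h0
  have := hne ξ ⟨hξ.1.le, hξ.2.trans hc.2⟩
  simpa [this] using h0

lemma exists_crit_left (p : ℝ[X]) (T y : ℝ) (hTy : y < T) (hy : p.eval y = 0)
    (hne : ∀ x ∈ Ioc y T, p.eval x ≠ 0) (hneg : p.eval T * (derivative p).eval T < 0) :
    ∃ ξ ∈ Ioo y T, (derivative p).eval ξ = 0 := by
  obtain ⟨c, hc, he⟩ := poly_mvt (p ^ 2) hTy
  have hT0 := hne T ⟨hTy, le_rfl⟩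
  have hd : ∀ x, (derivative (p ^ 2)).eval x = 2 * (p.eval x * (derivative p).eval x) := by
    intro x; rw [sq, derivative_mul]; simp; ring
  have hcpos : 0 < (derivative (p ^ 2)).eval c := by
    rw [eval_pow, eval_pow, hy] at he
    have : 0 < p.eval T ^ 2 := by positivity
    by_contra hcon
    have := mul_nonneg (neg_nonneg.2 (not_lt.1 hcon)) (sub_nonneg.2 hTy.le)
    linarith
  have hTneg : (derivative (p ^ 2)).eval T < 0 := by rw [hd]; linarith
  obtain ⟨ξ, hξ, h0⟩ := intermediate_value_Ioo' hc.2.le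
    (f := fun x => (derivative (p ^ 2)).eval x) (derivative (p ^ 2)).continuousOn
    (⟨hTneg, hcpos⟩ : (0:ℝ) ∈ Ioo _ _)
  refine ⟨ξ, ⟨hc.1.trans hξ.1, hξ.2⟩, ?_⟩
  simp only [hd] at h0
  have := hne ξ ⟨hc.1.trans hξ.1, hξ.2.le⟩
  simpa [this] using h0

lemma exists_min_gt (s : Multiset ℝ) (T : ℝ) (h : ∃ y ∈ s, T < y) :
    ∃ z ∈ s, T < z ∧ ∀ y ∈ s, T < y → z ≤ y := by
  obtain ⟨y, hy, hTy⟩ := h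
  obtain ⟨z, hz, hz'⟩ := Finset.exists_min_image (s.filter (T < ·)).toFinset id
    ⟨y, by simp [hy, hTy]⟩
  simp at hz hz'
  exact ⟨z, hz.1, hz.2, fun y hy h => hz' y hy h⟩

lemma exists_max_lt (s : Multiset ℝ) (T : ℝ) (h : ∃ y ∈ s, y < T) :
    ∃ z ∈ s, z < T ∧ ∀ y ∈ s, y < T → y ≤ z := by
  obtain ⟨y, hy, hTy⟩ := h
  obtain ⟨z, hz, hz'⟩ := Finset.exists_max_image (s.filter (· < T)).toFinset id
    ⟨y, by simp [hy, hTy]⟩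
  simp at hz hz'
  exact ⟨z, hz.1, hz.2, fun y hy h => hz' y hy h⟩

/-- Right count when the logarithmic derivative is positive. -/
lemma count_right (p : ℝ[X]) (T : ℝ) (hpos : 0 < p.eval T * (derivative p).eval T) :
    p.roots.countP (T < ·) ≤ (derivative p).roots.countP (T < ·) := by
  have hp' : derivative p ≠ 0 := by rintro h; simp [h] at hpos
  have hp : p ≠ 0 := by rintro h; simp [h] at hpos
  have hT0 : p.eval T ≠ 0 := by intro h; simp [h] at hpos
  by_cases h : ∃ y ∈ p.roots, T < y
  · obtain ⟨z, hz, hTz, hmin⟩ := exists_min_gt _ T h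
    obtain ⟨ξ, hξ, h0⟩ := exists_crit_right p T z hTz ((mem_roots hp).1 hz) (by
      intro x hx h0
      rcases hx.1.eq_or_lt with rfl | hlt
      · exact hT0 h0
      · have := hmin x ((mem_roots hp).2 h0) hlt
        linarith [hx.2]) hpos
    exact rolle_extra p hp' (T < ·) (z ≤ ·) (fun x y w hx hy h1 h2 => hx.trans h1.le)
      (fun x hx h => hmin x hx h) (fun x hx => hTz.trans_le hx) ξ h0 hξ.1 (not_le.2 hξ.2)
  · push Not at h
    rw [Multiset.countP_eq_zero.2 (fun y hy => not_lt.2 (h y hy))]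
    exact Nat.zero_le _

lemma count_left (p : ℝ[X]) (T : ℝ) (hneg : p.eval T * (derivative p).eval T < 0) :
    p.roots.countP (· < T) ≤ (derivative p).roots.countP (· < T) := by
  have hp' : derivative p ≠ 0 := by rintro h; simp [h] at hneg
  have hp : p ≠ 0 := by rintro h; simp [h] at hneg
  have hT0 : p.eval T ≠ 0 := by intro h; simp [h] at hneg
  by_cases h : ∃ y ∈ p.roots, y < T
  · obtain ⟨z, hz, hTz, hmax⟩ := exists_max_lt _ T h
    obtain ⟨ξ, hξ, h0⟩ := exists_crit_left p T z hTz ((mem_roots hp).1 hz) (by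
      intro x hx h0
      rcases hx.2.eq_or_lt with rfl | hlt
      · exact hT0 h0
      · have := hmax x ((mem_roots hp).2 h0) hlt
        linarith [hx.1]) hneg
    exact rolle_extra p hp' (· < T) (· ≤ z) (fun x y w hx hy h1 h2 => h2.le.trans hy)
      (fun x hx h => hmax x hx h) (fun x hx => lt_of_le_of_lt hx hTz) ξ h0 hξ.2 (not_le.2 hξ.1)
  · push Not at h
    rw [Multiset.countP_eq_zero.2 (fun y hy => not_lt.2 (h y hy))]
    exact Nat.zero_le _

lemma ord_lt (T : ℝ) : ∀ x y z : ℝ, x < T → y < T → x < z → z < y → z < T :=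
  fun _ _ _ _ hy _ h => h.trans hy
lemma ord_gt (T : ℝ) : ∀ x y z : ℝ, T < x → T < y → x < z → z < y → T < z :=
  fun _ _ _ hx _ h _ => hx.trans h

lemma fpoly_zero_eval (s : Multiset ℝ) : (fpoly s).eval 0 = 1 := by
  rw [fpoly_eval]; simp

lemma fpoly_ne_zero (s : Multiset ℝ) : fpoly s ≠ 0 := by
  intro h; have := fpoly_zero_eval s; simp [h] at this

lemma fpoly_deriv_zero (s : Multiset ℝ) :
    (derivative (fpoly s)).eval 0 = - (s.map fun y => 1 / y).sum := by
  induction s using Multiset.induction_on with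
  | empty => simp [fpoly]
  | cons y s ih =>
    rw [fpoly_deriv_cons, ih, fpoly_zero_eval, Multiset.map_cons, Multiset.sum_cons]
    simp; ring

lemma fpoly_roots (s : Multiset ℝ) (hs : ∀ y ∈ s, y ≠ 0) : (fpoly s).roots = s := by
  induction s using Multiset.induction_on with
  | empty => simp [fpoly]
  | cons y s ih =>
    have hy := hs y (by simp)
    have e : (1 - C y⁻¹ * X : ℝ[X]) = C (-y⁻¹) * (X - C y) := by
      have : (C y⁻¹ * C y : ℝ[X]) = 1 := by rw [← C_mul, inv_mul_cancel₀ hy, C_1]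
      rw [C_neg]; linear_combination (-1 : ℝ[X]) * this
    have hne := fpoly_ne_zero (y ::ₘ s)
    rw [fpoly_cons] at hne ⊢
    rw [roots_mul hne, ih (fun w hw => hs w (by simp [hw])), e,
      roots_C_mul _ (by simpa using hy), roots_X_sub_C, Multiset.singleton_add]

lemma fpoly_second_zero (s : Multiset ℝ) (hs : ∀ y ∈ s, 0 < y) :
    0 ≤ (derivative (derivative (fpoly s))).eval 0 := by
  induction s using Multiset.induction_on with
  | empty => simp [fpoly]
  | cons y s ih =>
    have ih' := ih (fun w hw => hs w (by simp [hw]))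
    have hy := hs y (by simp)
    have hd := fpoly_deriv_zero s
    have hnn : 0 ≤ (s.map fun y => 1 / y).sum := by
      apply Multiset.sum_nonneg
      intro x hx
      obtain ⟨w, hw, rfl⟩ := Multiset.mem_map.1 hx
      have := hs w (by simp [hw]); positivity
    have e : (derivative (derivative (fpoly (y ::ₘ s)))).eval 0 =
        (derivative (derivative (fpoly s))).eval 0 + 2 * y⁻¹ * (s.map fun y => 1 / y).sum := by
      rw [fpoly_cons]
      simp [derivative_mul]
      rw [hd]
      simp; ring
    rw [e]
    positivity

/-- Choice of the special zero together with the counts. -/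
lemma choose_zero (s : Multiset ℝ) (T : ℝ) (hs : ∀ y ∈ s, 0 < y)
    (hne : (derivative (fpoly s)).eval T ≠ 0) :
    ∃ z s', s = z ::ₘ s' ∧ T ∉ s' ∧
      (z = T ∨ (z < T ∧ (∀ y ∈ s', y ≤ z ∨ T < y) ∧
        0 < 1 / (T - z) + (s'.map fun y => 1 / (T - y)).sum) ∨
      (T < z ∧ (∀ y ∈ s', y < T ∨ z ≤ y) ∧
        1 / (T - z) + (s'.map fun y => 1 / (T - y)).sum < 0)) ∧
      s'.countP (· < T) ≤ (derivative (fpoly s)).roots.countP (· < T) ∧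
      s'.countP (T < ·) ≤ (derivative (fpoly s)).roots.countP (T < ·) := by
  have hroots := fpoly_roots s (fun y hy => (hs y hy).ne')
  have hp' : derivative (fpoly s) ≠ 0 := by intro h; simp [h] at hne
  by_cases hTs : T ∈ s
  · obtain ⟨s', hs'⟩ := Multiset.exists_cons_of_mem hTs
    have hTs' : T ∉ s' := by
      intro h
      apply hne
      rw [hs', fpoly_deriv_cons, div_self (hs T hTs).ne', sub_self, zero_mul, add_zero]
      have : (fpoly s').eval T = 0 := by
        have h2 : T ∈ (fpoly s').roots := by
          rw [fpoly_roots s' (fun y hy => (hs y (by rw [hs']; simp [hy])).ne')]; exact h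
        exact (mem_roots'.1 h2).2
      rw [this, mul_zero]
    have hT' : T ∉ (derivative (fpoly s)).roots := fun h => hne (mem_roots'.1 h).2
    refine ⟨T, s', hs', hTs', Or.inl rfl, ?_, ?_⟩
    · have h1 := rolle_count (fpoly s) hp' (· ≤ T) (fun x y z _ hy _ h => h.le.trans hy)
      rw [hroots, hs', Multiset.countP_cons_of_pos (p := fun x => x ≤ T) _ (le_refl T), ← hs'] at h1
      have e1 : s'.countP (· ≤ T) = s'.countP (· < T) :=
        Multiset.countP_congr rfl fun x hx =>
          propext ⟨fun h => lt_of_le_of_ne h (by rintro rfl; exact hTs' hx), fun h => h.le⟩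
      have e2 : (derivative (fpoly s)).roots.countP (· ≤ T) =
          (derivative (fpoly s)).roots.countP (· < T) :=
        Multiset.countP_congr rfl fun x hx =>
          propext ⟨fun h => lt_of_le_of_ne h (by rintro rfl; exact hT' hx), fun h => h.le⟩
      omega
    · have h1 := rolle_count (fpoly s) hp' (T ≤ ·) (fun x y z hx _ h _ => hx.trans h.le)
      rw [hroots, hs', Multiset.countP_cons_of_pos (p := fun x => T ≤ x) _ (le_refl T), ← hs'] at h1
      have e1 : s'.countP (T ≤ ·) = s'.countP (T < ·) :=
        Multiset.countP_congr rfl fun x hx =>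
          propext ⟨fun h => lt_of_le_of_ne h (by rintro rfl; exact hTs' hx), fun h => h.le⟩
      have e2 : (derivative (fpoly s)).roots.countP (T ≤ ·) =
          (derivative (fpoly s)).roots.countP (T < ·) :=
        Multiset.countP_congr rfl fun x hx =>
          propext ⟨fun h => lt_of_le_of_ne h (by rintro rfl; exact hT' hx), fun h => h.le⟩
      omega
  · have hder := fpoly_deriv s T (fun y hy => (hs y hy).ne') hTs
    set σ := (s.map fun y => 1 / (T - y)).sum with hσ
    have hF0 : (fpoly s).eval T ≠ 0 := by intro h; rw [hder, h, zero_mul] at hne; exact hne rfl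
    have hσ0 : σ ≠ 0 := by intro h; rw [hder, h, mul_zero] at hne; exact hne rfl
    have hsq : 0 < (fpoly s).eval T ^ 2 := by positivity
    have hFF : (fpoly s).eval T * (derivative (fpoly s)).eval T = (fpoly s).eval T ^ 2 * σ := by
      rw [hder]; ring
    rcases lt_or_gt_of_ne hσ0 with hneg | hpos
    · have hex : ∃ y ∈ s, T < y := by
        by_contra hcon
        push Not at hcon
        have : 0 ≤ σ := by
          apply Multiset.sum_nonneg
          intro x hx
          obtain ⟨w, hw, rfl⟩ := Multiset.mem_map.1 hx
          have := hcon w hw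
          exact one_div_nonneg.2 (by linarith)
        linarith
      obtain ⟨z, hz, hTz, hmin⟩ := exists_min_gt s T hex
      obtain ⟨s', hs'⟩ := Multiset.exists_cons_of_mem hz
      have hTs' : T ∉ s' := fun h => hTs (by rw [hs']; simp [h])
      refine ⟨z, s', hs', hTs', Or.inr (Or.inr ⟨hTz, fun y hy => ?_, ?_⟩), ?_, ?_⟩
      · rcases lt_trichotomy y T with h | h | h
        · exact Or.inl h
        · exact absurd hy (h ▸ hTs')
        · exact Or.inr (hmin y (by rw [hs']; simp [hy]) h)
      · rw [hσ, hs', Multiset.map_cons, Multiset.sum_cons] at hneg; exact hneg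
      · have := count_left (fpoly s) T (by rw [hFF]; exact mul_neg_of_pos_of_neg hsq hneg)
        rw [hroots] at this
        refine le_trans ?_ this
        exact Multiset.countP_le_of_le _ (by rw [hs']; exact Multiset.le_cons_self _ _)
      · have := rolle_count (fpoly s) hp' (T < ·) (ord_gt T)
        rw [hroots] at this
        conv at this => lhs; rw [hs', Multiset.countP_cons_of_pos (p := fun x => T < x) _ hTz]
        omega
    · have hex : ∃ y ∈ s, y < T := by
        by_contra hcon
        push Not at hcon
        have : 0 ≤ (s.map fun y => -1 * (1 / (T - y))).sum := by
          apply Multiset.sum_nonneg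
          intro x hx
          obtain ⟨w, hw, rfl⟩ := Multiset.mem_map.1 hx
          have := hcon w hw
          have := one_div_nonpos.2 (by linarith : T - w ≤ 0)
          linarith
        rw [Multiset.sum_map_mul_left] at this
        linarith
      obtain ⟨z, hz, hTz, hmax⟩ := exists_max_lt s T hex
      obtain ⟨s', hs'⟩ := Multiset.exists_cons_of_mem hz
      have hTs' : T ∉ s' := fun h => hTs (by rw [hs']; simp [h])
      refine ⟨z, s', hs', hTs', Or.inr (Or.inl ⟨hTz, fun y hy => ?_, ?_⟩), ?_, ?_⟩
      · rcases lt_trichotomy y T with h | h | h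
        · exact Or.inl (hmax y (by rw [hs']; simp [hy]) h)
        · exact absurd hy (h ▸ hTs')
        · exact Or.inr h
      · rw [hσ, hs', Multiset.map_cons, Multiset.sum_cons] at hpos; exact hpos
      · have := rolle_count (fpoly s) hp' (· < T) (ord_lt T)
        rw [hroots] at this
        conv at this => lhs; rw [hs', Multiset.countP_cons_of_pos (p := fun x => x < T) _ hTz]
        omega
      · have := count_right (fpoly s) T (by rw [hFF]; exact mul_pos hsq hpos)
        rw [hroots] at this
        refine le_trans ?_ this
        exact Multiset.countP_le_of_le _ (by rw [hs']; exact Multiset.le_cons_self _ _)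

/-- First critical point of the derivative. -/
lemma branch_zero (F : ℝ[X]) (T B K : ℝ) (hT : 0 < T) (hTB : T < B) (hF0 : F.eval 0 = 1)
    (hF1 : (derivative F).eval 0 = -K) (hK : 0 < K)
    (hF2 : 0 ≤ (derivative (derivative F)).eval 0)
    (hsp : (derivative (derivative F)).Splits) (hne : derivative (derivative F) ≠ 0)
    (hge : ∀ ρ ∈ (derivative (derivative F)).roots, T ≤ ρ)
    (hb : ∀ x ∈ Icc 0 B, |F.eval x| ≤ 1) :
    |(derivative F).eval T| < K := by
  by_contra hcon
  push Not at hcon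
  set D := derivative (derivative F) with hD
  have hev : ∀ x, D.eval x = D.eval 0 * (fpoly D.roots).eval x := by
    intro x
    have e1 := hsp.eval_eq_prod_roots x
    have e2 := hsp.eval_eq_prod_roots 0
    rw [e1, e2, fpoly_eval, mul_assoc, ← Multiset.prod_map_mul]
    congr 2
    refine Multiset.map_congr rfl fun ρ hρ => ?_
    have := hge ρ hρ
    have : ρ ≠ 0 := by linarith
    field_simp
    ring
  have hD0 : 0 < D.eval 0 := by
    refine lt_of_le_of_ne hF2 fun h => ?_
    have := hge 0 ((mem_roots hne).2 h.symm)
    linarith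
  have hpos : ∀ x ∈ Ioo 0 T, 0 < D.eval x := by
    intro x hx
    rw [hev]
    refine mul_pos hD0 ?_
    rw [fpoly_eval]
    apply Multiset.prod_pos
    intro y hy
    obtain ⟨ρ, hρ, rfl⟩ := Multiset.mem_map.1 hy
    have h1 := hge ρ hρ
    have : x / ρ < 1 := by rw [div_lt_one (by linarith)]; linarith [hx.2]
    linarith
  have hanti : ∀ x y, 0 < x → x < y → y < T → D.eval y ≤ D.eval x := by
    intro x y hx hxy hyT
    rw [hev x, hev y]
    refine mul_le_mul_of_nonneg_left ?_ hD0.le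
    rw [fpoly_eval, fpoly_eval]
    apply Multiset.prod_map_le_prod_map₀
    · intro ρ hρ
      have h1 := hge ρ hρ
      have : y / ρ ≤ 1 := by rw [div_le_one (by linarith)]; linarith
      linarith
    · intro ρ hρ
      have h1 := hge ρ hρ
      have h2 : 0 < ρ := by linarith
      have : x / ρ ≤ y / ρ := by gcongr
      linarith
  obtain ⟨c, hc, hce⟩ := poly_mvt (derivative F) hT
  have h1 : (derivative F).eval T > -K := by
    have := mul_pos (hpos c hc) hT
    rw [hF1] at hce
    rw [← hD] at hce
    linarith
  have h2 : K ≤ (derivative F).eval T := by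
    rcases le_abs.1 hcon with h | h
    · exact h
    · linarith
  set H : ℝ[X] := F - 1 - X * (C ((derivative F).eval 0) + derivative F) * C (1 / 2) with hH
  obtain ⟨d, hd, hde⟩ := poly_mvt H hT
  have hHd : (derivative H).eval d =
      ((derivative F).eval d - (derivative F).eval 0 - d * D.eval d) / 2 := by
    rw [hH]
    simp [derivative_mul, ← hD]
    ring
  have hHnn : 0 ≤ (derivative H).eval d := by
    rw [hHd]
    obtain ⟨e, he, hee⟩ := poly_mvt (derivative F) hd.1
    have := hanti e d he.1 he.2 hd.2
    rw [hee, ← hD]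
    have := mul_le_mul_of_nonneg_right this hd.1.le
    linarith
  have hH0 : H.eval 0 = 0 := by rw [hH]; simp [hF0]
  have hHT : H.eval T = F.eval T - 1 - T * (-K + (derivative F).eval T) / 2 := by
    rw [hH]; simp [hF1]; ring
  have hFT : 1 ≤ F.eval T := by
    have h3 := mul_nonneg hHnn (sub_nonneg.2 hT.le)
    rw [← hde, hHT, hH0] at h3
    have := mul_nonneg hT.le (by linarith : 0 ≤ -K + (derivative F).eval T)
    linarith
  have hpos' : ∀ᶠ x in nhds T, 0 < (derivative F).eval x :=
    (derivative F).continuous.continuousAt.eventually (lt_mem_nhds (by linarith : 0 < (derivative F).eval T))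
  obtain ⟨ε, hε, hball⟩ := Metric.eventually_nhds_iff.1 hpos'
  set u := min (T + ε / 2) B with hu
  have hTu : T < u := lt_min (by linarith) hTB
  obtain ⟨e, he, hee⟩ := poly_mvt F hTu
  have h5 : 0 < (derivative F).eval e := by
    apply hball
    rw [Real.dist_eq, abs_of_pos (by linarith [he.1])]
    have := he.2.trans_le (min_le_left _ _)
    linarith
  have h6 := mul_pos h5 (sub_pos.2 hTu)
  have h7 := (abs_le.1 (hb u ⟨by linarith, min_le_right _ _⟩)).2
  linarith

theorem norm_main (s : Multiset ℝ) (B T : ℝ) (j : ℕ) (hs : ∀ y ∈ s, 0 < y) (hsB : ∀ y ∈ s, y ≤ B)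
    (hb : ∀ x ∈ Icc 0 B, |(fpoly s).eval x| ≤ 1) (hj : 2 * (j + 1) + 1 ≤ s.card)
    (hc : (derivative (derivative (fpoly s))).roots.card = s.card - 2)
    (hl : (derivative (derivative (fpoly s))).roots.countP (· < T) ≤ j)
    (hr : (derivative (derivative (fpoly s))).roots.countP (T < ·) + j + 3 ≤ s.card) :
    |(derivative (fpoly s)).eval T| < |(derivative (fpoly s)).eval 0| := by
  set K := (s.map fun y => 1 / y).sum with hK
  have hK0 : 0 < K := by
    obtain ⟨y, hy⟩ := Multiset.card_pos_iff_exists_mem.1 (by omega : 0 < s.card)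
    obtain ⟨t, ht⟩ := Multiset.exists_cons_of_mem hy
    have := hs y hy
    rw [hK, ht, Multiset.map_cons, Multiset.sum_cons]
    have hnn : 0 ≤ (t.map fun y => 1 / y).sum := by
      apply Multiset.sum_nonneg
      intro x hx
      obtain ⟨w, hw, rfl⟩ := Multiset.mem_map.1 hx
      have := hs w (by rw [ht]; simp [hw]); positivity
    positivity
  have hd0 := fpoly_deriv_zero s
  rw [hd0, abs_neg, ← hK, abs_of_pos hK0]
  by_contra hcon
  have hM := not_lt.1 hcon
  have hne : (derivative (fpoly s)).eval T ≠ 0 := by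
    intro h; rw [h, abs_zero] at hM; linarith
  obtain ⟨z, s', hzs, hTs', hcase, hcl, hcr⟩ := choose_zero s T hs hne
  have hp2 : derivative (derivative (fpoly s)) ≠ 0 := by
    intro h; rw [h, roots_zero, Multiset.card_zero] at hc; omega
  have hl1 := rolle_count (derivative (fpoly s)) hp2 (· < T) (ord_lt T)
  have hr1 := rolle_count (derivative (fpoly s)) hp2 (T < ·) (ord_gt T)
  have hcard' : s.card = s'.card + 1 := by rw [hzs, Multiset.card_cons]
  have hcard : s'.card = s'.countP (· < T) + s'.countP (T < ·) := by
    have := sum_two s' T 1 1 hTs'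
    simp at this
    exact_mod_cast this
  have hz : 0 < z := hs z (by rw [hzs]; simp)
  have hzB : z ≤ B := hsB z (by rw [hzs]; simp)
  have hs' : ∀ y ∈ s', 0 < y := fun y hy => hs y (by rw [hzs]; simp [hy])
  have hsB' : ∀ y ∈ s', y ≤ B := fun y hy => hsB y (by rw [hzs]; simp [hy])
  have hT : 0 < T := by
    obtain ⟨y, hy, hyT⟩ := Multiset.countP_pos.1 (by omega : 0 < s'.countP (· < T))
    exact (hs' y hy).trans hyT
  have hTB : T < B := by
    obtain ⟨y, hy, hyT⟩ := Multiset.countP_pos.1 (by omega : 0 < s'.countP (T < ·))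
    exact hyT.trans_le (hsB' y hy)
  have h1 : 1 ≤ (s'.map fun y => |1 - T / y|).prod := by
    have := special_zero z T s' hT hz hs' hTs' hcase
    rw [← hzs, ← hK] at this
    have h2 : K * 1 ≤ K * (s'.map fun y => |1 - T / y|).prod := by linarith
    exact le_of_mul_le_mul_left h2 hK0
  rcases Nat.eq_zero_or_pos j with rfl | hj0
  · refine hcon (branch_zero (fpoly s) T B K hT hTB (fpoly_zero_eval s) hd0 hK0
      (fpoly_second_zero s hs) ?_ hp2 ?_ hb)
    · rw [splits_iff_card_roots]
      apply le_antisymm (card_roots' _)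
      rw [hc]
      refine (natDegree_derivative_le _).trans ?_
      have := natDegree_derivative_le (fpoly s)
      have := fpoly_natDegree s
      omega
    · have := Multiset.countP_eq_zero.1 (Nat.le_zero.1 hl)
      exact fun ρ hρ => not_lt.1 (this ρ hρ)
  · apply hcon
    rw [hK, hzs]
    rcases le_or_gt (2 * T) B with h2 | h2
    · exact caseA z T s' hT hz hs' hTs' h1
        (fun x hx => by rw [← hzs]; exact hb x ⟨hx.1, hx.2.trans h2⟩) (by omega)
    · exact caseB z T B s' hT hz hzB hs' hsB' hTB h2 hTs' h1 (by rw [← hzs]; exact hb) (by omega)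
        (by omega) hcard

lemma shift_fpoly (P : ℝ[X]) (a : ℝ) (hsp : P.Splits) (ha : ∀ x ∈ P.roots, x ≠ a) :
    P.comp (X + C a) = C (P.eval a) * fpoly (P.roots.map fun x => x - a) := by
  apply Polynomial.funext
  intro t
  rw [eval_comp, eval_mul, eval_C, fpoly_eval, Multiset.map_map, hsp.eval_eq_prod_roots a,
    hsp.eval_eq_prod_roots, mul_assoc, ← Multiset.prod_map_mul]
  congr 2
  refine Multiset.map_congr rfl fun x hx => ?_
  have : x - a ≠ 0 := sub_ne_zero.2 (ha x hx)
  simp only [Function.comp, eval_add, eval_X, eval_C]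
  field_simp
  ring

lemma roots_shift (P : ℝ[X]) (a : ℝ) :
    (P.comp (X + C a)).roots = P.roots.map fun x => x - a := by
  have := roots_comp_C_mul_X_add_C P 1 a isUnit_one
  simpa using this

theorem bojanov_naidenov (n : ℕ) (hn : 3 ≤ n) (a b : ℝ) (hab : a ≤ b)
    (P : Polynomial ℝ) (hdeg : P.natDegree = n)
    (hcard : P.roots.card = n)
    (hloc : ∀ x ∈ P.roots, x ∈ Set.Icc a b)
    (hmax : ∀ x ∈ Set.Icc a b, |P.eval x| ≤ 1)
    (ha : |P.eval a| = 1)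
    (τ : Fin (n - 2) → ℝ) (hmono : Monotone τ)
    (hτ : (derivative (derivative P)).roots = (List.ofFn τ : List ℝ)) :
    ∀ j : Fin (n - 2), (j : ℕ) + 1 ≤ (n - 1) / 2 →
      |(derivative P).eval (τ j)| < |(derivative P).eval a| := by
  intro j hj
  have hsp : P.Splits := by rw [splits_iff_card_roots, hcard, hdeg]
  have hra : ∀ x ∈ P.roots, x ≠ a := by
    rintro x hx rfl
    have := (mem_roots'.1 hx).2
    rw [this] at ha; simp at ha
  have hsh := shift_fpoly P a hsp hra
  set s := P.roots.map fun x => x - a with hs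
  set ε := P.eval a with hε
  have hε0 : ε ≠ 0 := by intro h; rw [h] at ha; simp at ha
  have hd1 : (derivative P).comp (X + C a) = C ε * derivative (fpoly s) := by
    have := congrArg derivative hsh
    rw [derivative_comp] at this
    simpa using this
  have hd2 : (derivative (derivative P)).comp (X + C a) = C ε * derivative (derivative (fpoly s)) := by
    have := congrArg derivative hd1
    rw [derivative_comp] at this
    simpa using this
  have hev : ∀ t, |P.eval t| = |(fpoly s).eval (t - a)| := by
    intro t
    have := congrArg (eval (t - a)) hsh
    simp only [eval_comp, eval_add, eval_X, eval_C, eval_mul, sub_add_cancel] at this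
    rw [this, abs_mul, ha, one_mul]
  have hev1 : ∀ t, |(derivative P).eval t| = |(derivative (fpoly s)).eval (t - a)| := by
    intro t
    have := congrArg (eval (t - a)) hd1
    simp only [eval_comp, eval_add, eval_X, eval_C, eval_mul, sub_add_cancel] at this
    rw [this, abs_mul, ha, one_mul]
  have hroots : (derivative (derivative (fpoly s))).roots =
      ((List.ofFn τ : List ℝ) : Multiset ℝ).map fun x => x - a := by
    rw [← hτ, ← roots_shift, hd2, roots_C_mul _ hε0]
  have hscard : s.card = n := by rw [hs, Multiset.card_map, hcard]
  rw [hev1, hev1, sub_self]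
  have hcl : ∀ (q : ℝ → Prop) [DecidablePred q], (derivative (derivative (fpoly s))).roots.countP q =
      (Finset.univ.filter fun i : Fin (n - 2) => q (τ i - a)).card := by
    intro q _
    rw [hroots, Multiset.countP_map]
    have e : ((List.ofFn τ : List ℝ) : Multiset ℝ) = (Finset.univ : Finset (Fin (n - 2))).val.map τ := by
      simp [List.ofFn_eq_map]
    rw [e, Multiset.filter_map, Multiset.card_map]
    rfl
  refine norm_main s (b - a) (τ j - a) j ?_ ?_ ?_ (by omega) ?_ ?_ ?_
  · intro y hy
    obtain ⟨x, hx, rfl⟩ := Multiset.mem_map.1 hy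
    exact sub_pos.2 (lt_of_le_of_ne (hloc x hx).1 (hra x hx).symm)
  · intro y hy
    obtain ⟨x, hx, rfl⟩ := Multiset.mem_map.1 hy
    linarith [(hloc x hx).2]
  · intro x hx
    have := hev (x + a)
    rw [add_sub_cancel_right] at this
    rw [← this]
    exact hmax _ ⟨by linarith [hx.1], by linarith [hx.2]⟩
  · rw [hroots, hscard]; simp
  · rw [hcl]
    have : (Finset.univ.filter fun i : Fin (n - 2) => τ i - a < τ j - a) ⊆ Finset.Iio j := by
      intro i hi
      simp only [Finset.mem_filter, Finset.mem_univ, true_and, sub_lt_sub_iff_right] at hi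
      rw [Finset.mem_Iio]
      by_contra h
      exact absurd (hmono (not_lt.1 h)) (not_le.2 hi)
    simpa using Finset.card_le_card this
  · rw [hcl, hscard]
    have : (Finset.univ.filter fun i : Fin (n - 2) => τ j - a < τ i - a) ⊆ Finset.Ioi j := by
      intro i hi
      simp only [Finset.mem_filter, Finset.mem_univ, true_and, sub_lt_sub_iff_right] at hi
      rw [Finset.mem_Ioi]
      by_contra h
      exact absurd (hmono (not_lt.1 h)) (not_le.2 hi)
    have h2 := Finset.card_le_card this
    rw [Fin.card_Ioi] at h2
    have := j.2
    omega
end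

section
/- (Bojanov–Naidenov, symmetric case) Let P be a real polynomial of degree n all of whose zeros are real and lie in [-1,1], which is symmetric, i.e., P(-x) = (-1)^n P(x) for all x, and assume max_{x∈[-1,1]} |P(x)| = |P(1)| = 1. Then for every k = 1, …, n, max_{x∈[-1,1]} |P^{(k)}(x)| = |P^{(k)}(1)|, where P^{(k)} denotes the k-th derivative of P. -/
open Polynomial Set

lemma bn_log25 : (0.91625:ℝ) ≤ Real.log 2.5 := by
  rw [Real.le_log_iff_exp_le (by norm_num)]
  have h := Real.exp_bound' (x := 0.91625) (by norm_num) (by norm_num) (n := 10) (by norm_num)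
  refine h.trans ?_
  norm_num [Finset.sum_range_succ, Nat.factorial]

lemma bn_log_one_add_sq (W : ℝ) (hW : 0 ≤ W) : Real.log (1 + W^2) ≤ 2 * (0.405 * W) := by
  rw [Real.log_le_iff_le_exp (by positivity)]
  have h := Real.sum_le_exp_of_nonneg (x := 2 * (0.405 * W)) (by positivity) 7
  refine le_trans ?_ h
  have e : 2 * (0.405 * W) = 0.81 * W := by ring
  rw [e]
  simp only [Finset.sum_range_succ, Finset.sum_range_zero, Nat.factorial]
  obtain ⟨t, ht⟩ : ∃ t, t = 0.81 * W := ⟨_, rfl⟩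
  have hW' : W = t / 0.81 := by rw [ht]; ring
  have ht0 : 0 ≤ t := by rw [ht]; positivity
  rw [← ht, hW']
  have key : 0 ≤ 1 - 1.0242 * t + t^2/6 + t^3/24+t^4/120+t^5/720 := by
    nlinarith [mul_nonneg ht0 (sq_nonneg (t-1.6)), mul_nonneg ht0 (sq_nonneg (t^2-1.6*t)), sq_nonneg (t-1.6), sq_nonneg (t^2-1.6*t), mul_nonneg ht0 (sq_nonneg (t^2-1.6^2)), sq_nonneg (t^2-1.6^2)]
  have := mul_nonneg ht0 key
  norm_num
  nlinarith [sq_nonneg t]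

lemma bn_log_q (q α : ℝ) (hq : 1 ≤ q) (hα : 0 < α) :
    (1/2) * Real.log (1 + q*(q-1)*α^2) ≤ 0.4134 * α * (q - 0.6) := by
  have h0 : 0 ≤ q - 0.6 := by linarith
  have h1 := bn_log_one_add_sq (0.4134/0.405 * α * (q-0.6)) (by positivity)
  have h2 : Real.log (1 + q*(q-1)*α^2) ≤ Real.log (1 + (0.4134/0.405 * α * (q-0.6))^2) := by
    apply Real.log_le_log
    · have : 0 ≤ q*(q-1)*α^2 := by
        apply mul_nonneg (mul_nonneg (by linarith) (by linarith)) (by positivity)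
      linarith
    · have : q*(q-1) ≤ (0.4134/0.405)^2 * (q-0.6)^2 := by
        norm_num
        nlinarith [sq_nonneg (q-3)]
      have := mul_le_mul_of_nonneg_right this (sq_nonneg α)
      nlinarith
  linarith

lemma bn_arsinh_le (k p : ℝ) (hk : 0 ≤ k) (hp : 0 ≤ p) (hpk : p^2 = 1 + k^2) :
    Real.log (1 + 2*k^2 + 2*k*p) ≤ 2 * k := by
  have e : 1 + 2*k^2 + 2*k*p = (k+p)^2 := by nlinarith
  have hp0 : 0 < p := by nlinarith [sq_nonneg k]
  rw [e, Real.log_pow]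
  have : Real.log (k+p) ≤ k := by
    rw [Real.log_le_iff_le_exp (by positivity)]
    have := Real.quadratic_le_exp_of_nonneg hk
    have : p ≤ 1 + k^2/2 := by
      apply abs_le_of_sq_le_sq' _ (by positivity) |>.2
      nlinarith [sq_nonneg (k^2)]
    linarith
  push_cast; linarith

lemma bn_arsinh_ge (κ : ℝ) (hκ : 0 ≤ κ) : κ - κ^3/6 ≤ Real.arsinh κ := by
  have hm : MonotoneOn (fun x : ℝ => Real.arsinh x - (x - x^3/6)) (Set.Ici 0) := by
    have hd : ∀ x : ℝ, HasDerivAt (fun x : ℝ => Real.arsinh x - (x - x^3/6)) ((√(1+x^2))⁻¹ - (1 - x^2/2)) x := by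
      intro x
      have := (Real.hasDerivAt_arsinh x).sub ((hasDerivAt_id x).sub ((hasDerivAt_pow 3 x).div_const 6))
      have e : (√(1 + x ^ 2))⁻¹ - (1 - x ^ 2 / 2) = (√(1 + x ^ 2))⁻¹ - (1 - ((3:ℕ):ℝ) * x ^ (3 - 1) / 6) := by
        norm_num
        ring
      rw [e]
      exact this
    apply monotoneOn_of_deriv_nonneg (convex_Ici 0)
    · exact fun x _ => (hd x).continuousAt.continuousWithinAt
    · exact fun x _ => (hd x).differentiableAt.differentiableWithinAt
    · intro x hx
      rw [(hd x).deriv]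
      have h1 : 0 < √(1+x^2) := by positivity
      have h2 : √(1+x^2)^2 = 1 + x^2 := Real.sq_sqrt (by positivity)
      have h3 : (√(1+x^2))⁻¹ * √(1+x^2) = 1 := inv_mul_cancel₀ h1.ne'
      have h4 : √(1+x^2) ≤ 1 + x^2/2 := by
        apply abs_le_of_sq_le_sq' _ (by positivity) |>.2
        nlinarith [sq_nonneg (x^2)]
      have h5 : (1 - x^2/2) * √(1+x^2) ≤ 1 := by
        by_cases hc : 0 ≤ 1 - x^2/2
        · nlinarith [mul_le_mul_of_nonneg_left h4 hc, sq_nonneg (x^2)]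
        · nlinarith
      rw [sub_nonneg, ← one_div, le_div_iff₀ h1]
      exact h5
  have := hm (a := 0) (by simp) (b := κ) hκ hκ
  simp at this
  linarith

lemma bn_log1 (κ : ℝ) (hκ : 0 ≤ κ) :
    2 * κ * (1 - κ^2/6) ≤ Real.log (1 + 2*κ^2 + 2*κ*√(1+κ^2)) := by
  have h := bn_arsinh_ge κ hκ
  have e : 1 + 2*κ^2 + 2*κ*√(1+κ^2) = (κ+√(1+κ^2))^2 := by
    have : √(1+κ^2)^2 = 1 + κ^2 := Real.sq_sqrt (by positivity)
    nlinarith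
  rw [e, Real.log_pow]
  rw [Real.arsinh] at h
  push_cast
  nlinarith

/-- the final numerical inequality -/
lemma bn_slope (r k : ℝ) (hr : 0 < r) (hr1 : r ≤ 1) (hk : 0 < k)
    (hc : 6*(r*k) ≤ 5*(r^2 - k^2 + r^2*k^2)) :
    0.4134^2 * (r^2+k^2) * (1+k^2) ≤ 0.3665^2 * r^2 * (2 + r^2 + k^2) := by
  obtain ⟨τ, rfl⟩ : ∃ τ, k = τ * r := ⟨k / r, by field_simp⟩
  have hτ : 0 < τ := pos_of_mul_pos_left hk hr.le
  have hr2 : 0 < r^2 := by positivity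
  have hc' : 6*τ ≤ 5*(1 - τ^2 + r^2*τ^2) := by
    have : r^2*(6*τ) ≤ r^2*(5*(1 - τ^2 + r^2*τ^2)) := by nlinarith
    exact le_of_mul_le_mul_left this hr2
  obtain ⟨a, ha⟩ : ∃ a, a = r^2 := ⟨_, rfl⟩
  have ha1 : a ≤ 1 := by rw [ha]; nlinarith
  have ha0 : 0 < a := by rw [ha]; exact hr2
  rw [← ha] at hc'
  have ht : τ ≤ 5/6 := by nlinarith [sq_nonneg τ]
  have key : 0.4134^2 * (1+τ^2) * (1+a*τ^2) ≤ 0.3665^2 * (2 + a + a*τ^2) := by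
    have ht2 : τ^2 ≤ 25/36 := by nlinarith
    by_cases h : τ ≤ 0.75
    · have : τ^2 ≤ 0.5625 := by nlinarith
      nlinarith [mul_nonneg ha0.le (sub_nonneg.2 this), mul_nonneg (mul_nonneg ha0.le (sq_nonneg τ)) (sub_nonneg.2 this)]
    · push Not at h
      have h75 : 0.5625 ≤ τ^2 := by nlinarith
      have hal : 0.8 ≤ a := by
        by_contra hh
        push Not at hh
        nlinarith
      obtain ⟨t, htt⟩ : ∃ t, t = τ^2 := ⟨_, rfl⟩
      rw [← htt] at ht2 h75 ⊢
      have hal' := sub_nonneg.2 hal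
      have c1 := mul_nonneg (sub_nonneg.2 h75) (sub_nonneg.2 ht2)
      nlinarith [mul_nonneg ha0.le c1, mul_nonneg hal' (sub_nonneg.2 ht2), mul_nonneg hal' (sub_nonneg.2 h75), mul_nonneg (sub_nonneg.2 ha1) (sub_nonneg.2 ht2), mul_nonneg (sub_nonneg.2 ha1) (sub_nonneg.2 h75)]
  calc 0.4134^2 * (r^2+(τ*r)^2) * (1+(τ*r)^2) = r^2 * (0.4134^2 * (1+τ^2) * (1+a*τ^2)) := by rw [ha]; ring
    _ ≤ r^2 * (0.3665^2 * (2 + a + a*τ^2)) := by gcongr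
    _ = _ := by rw [ha]; ring

lemma bn_II (r k κ p : ℝ) (hr : 0 < r) (hr1 : r ≤ 1) (hk : 0 < k) (hkr : k ≤ 5/6*r)
    (hκ : 0 ≤ κ) (hκ2 : 2*κ^2 = r^2 + k^2) (hp : 0 < p) (hpk : p^2 = 1+k^2) :
    √(1+κ^2) * (1 - 0.3665*r) ≤ p * (1 - κ^2/6 - 0.16536*κ) := by
  have h1 : √(1+κ^2) ≤ p * (1 + (r^2-k^2)/4) := by
    have h0 : 0 ≤ (r^2-k^2) := by nlinarith
    apply Real.sqrt_le_iff.2 ⟨by positivity, ?_⟩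
    rw [mul_pow, hpk]
    nlinarith [mul_nonneg (sq_nonneg k) h0, mul_nonneg (sq_nonneg k) (sq_nonneg (r^2-k^2)), sq_nonneg (r^2-k^2)]
  obtain ⟨τ, rfl⟩ : ∃ τ, k = τ * r := ⟨k / r, by field_simp⟩
  have hτ : 0 < τ := pos_of_mul_pos_left hk hr.le
  have ht : τ ≤ 5/6 := by
    by_contra h; push Not at h; nlinarith
  have hk2 : κ ≤ 0.7072 * r * (1 + τ^2/2) := by
    apply abs_le_of_sq_le_sq' _ (by positivity) |>.2
    nlinarith [mul_nonneg (sq_nonneg r) (sq_nonneg τ), mul_nonneg (sq_nonneg r) (sq_nonneg (τ^2)), sq_nonneg r]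
  have h2 : (1 + (r^2-(τ*r)^2)/4) * (1 - 0.3665*r) ≤ 1 - κ^2/6 - 0.16536*κ := by
    obtain ⟨t, htt⟩ : ∃ t, t = τ^2 := ⟨_, rfl⟩
    have ht0 : 0 ≤ t := by rw [htt]; positivity
    have ht1 : t ≤ 25/36 := by rw [htt]; nlinarith
    have hκ3 : κ^2 = r^2*(1+t)/2 := by rw [htt]; nlinarith
    rw [← htt] at hk2
    rw [hκ3, mul_pow, ← htt]
    have key : 0 ≤ 0.3665 - r*(1+t)/12 - 0.16536*0.7072*(1+t/2) - r*(1-t)/4 + 0.3665*r^2*(1-t)/4 := by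
      nlinarith [mul_nonneg ht0 (sub_nonneg.2 hr1), mul_nonneg (sub_nonneg.2 ht1) (sub_nonneg.2 hr1), mul_nonneg (sub_nonneg.2 ht1) (sq_nonneg (1-r)), mul_nonneg ht0 (sq_nonneg (1-r)), mul_nonneg (mul_nonneg ht0 hr.le) (sub_nonneg.2 hr1)]
    have := mul_nonneg hr.le key
    nlinarith
  have h3 : 0 ≤ 1 - 0.3665*r := by linarith
  calc √(1+κ^2) * (1 - 0.3665*r) ≤ p * (1 + (r^2-(τ*r)^2)/4) * (1 - 0.3665*r) := by gcongr
    _ = p * ((1 + (r^2-(τ*r)^2)/4) * (1 - 0.3665*r)) := by ring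
    _ ≤ _ := by gcongr

lemma bn_final (r k p s1 q : ℝ) (hr : 0 < r) (hr1 : r ≤ 1) (hk : 0 < k)
    (hc : 6*(r*k) ≤ 5*(r^2 - k^2 + r^2*k^2)) (hp : 0 < p) (hpk : p^2 = 1+k^2)
    (hs1 : 0 < s1) (hs : s1^2 = (r^2+k^2)^2 + 2*(r^2+k^2)) (hq : 1 ≤ q) :
    (2*k*p)/s1 * ((1/2) * Real.log (1 + q*(q-1)*(r^2+k^2)^2) - Real.log (1 + (r^2+k^2) + s1))
      + Real.log (1 + 2*k^2 + 2*k*p) ≤ 2 * q * (r*k) * 0.3665 := by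
  have hkr : k ≤ 5/6*r := by
    have h0 : r^2*k^2 ≤ k^2 := mul_le_of_le_one_left (sq_nonneg k) (by nlinarith)
    have h1 : r*(6*k) ≤ r*(5*r) := by nlinarith
    have := le_of_mul_le_mul_left h1 hr
    linarith
  obtain ⟨κ, hκ⟩ : ∃ κ, κ = √((r^2+k^2)/2) := ⟨_, rfl⟩
  have hκ0 : 0 < κ := by rw [hκ]; positivity
  have hκ2 : 2*κ^2 = r^2+k^2 := by rw [hκ, Real.sq_sqrt (by positivity)]; ring
  have hs1' : s1 = 2*κ*√(1+κ^2) := by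
    have h2 : √(1+κ^2)^2 = 1 + κ^2 := Real.sq_sqrt (by positivity)
    rw [← abs_of_pos hs1, ← abs_of_nonneg (show 0 ≤ 2*κ*√(1+κ^2) by positivity), ← sq_eq_sq_iff_abs_eq_abs, hs, ← hκ2, mul_pow (2*κ), h2]; ring
  have h1 := bn_log1 κ hκ0.le
  have h2 := bn_II r k κ p hr hr1 hk hkr hκ0.le hκ2 hp hpk
  have h3 := bn_arsinh_le k p hk.le hp.le hpk
  have h4 := bn_slope r k hr hr1 hk hc
  have h5 := bn_log_q q (r^2+k^2) hq (by positivity)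
  rw [← hs1', hκ2] at h1
  have h6 : p * (0.4134*(r^2+k^2)) ≤ r * 0.3665 * s1 := by
    apply abs_le_of_sq_le_sq' _ (by positivity) |>.2
    rw [mul_pow, mul_pow (r*0.3665), hpk, hs]
    have := mul_le_mul_of_nonneg_left h4 (show 0 ≤ r^2+k^2 by positivity)
    nlinarith
  have h7 : s1 * (1 - 0.3665*r) ≤ p * (2*κ*(1-κ^2/6) - 0.16536*(r^2+k^2)) := by
    have := mul_le_mul_of_nonneg_left h2 (show 0 ≤ 2*κ by positivity)
    rw [hs1', ← hκ2]
    nlinarith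
  have h8 : (2*k*p)/s1 * ((1/2) * Real.log (1 + q*(q-1)*(r^2+k^2)^2) - Real.log (1 + (r^2+k^2) + s1))
     ≤ (2*k*p)/s1 * (0.4134*(r^2+k^2)*(q-0.6) - 2*κ*(1-κ^2/6)) := by
    apply mul_le_mul_of_nonneg_left _ (by positivity)
    linarith
  have h9 : (2*k*p)/s1 * (0.4134*(r^2+k^2)*(q-0.6) - 2*κ*(1-κ^2/6)) ≤ 2*q*(r*k)*0.3665 - 2*k := by
    rw [div_mul_eq_mul_div, div_le_iff₀ hs1]
    have : p*(0.4134*(r^2+k^2)*(q-0.6) - 2*κ*(1-κ^2/6)) ≤ (q*r*0.3665 - 1)*s1 := by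
      nlinarith [mul_le_mul_of_nonneg_left h6 (sub_nonneg.2 hq)]
    nlinarith [mul_le_mul_of_nonneg_left this hk.le]
  linarith
/-- root of the quadratic on the unit circle -/
noncomputable def bnRho (q : ℝ) : ℂ := ⟨1 - 2/q, √(1 - (1-2/q)^2)⟩
noncomputable def bnRho' (q : ℝ) : ℂ := ⟨1 - 2/q, -√(1 - (1-2/q)^2)⟩

noncomputable def bnG (q : ℝ) (z : ℂ) : ℝ :=
  Real.log (q/4) + Real.log ‖z - bnRho q‖ + Real.log ‖z - bnRho' q‖

lemma bn_disc (q : ℝ) (hq : 1 ≤ q) : 0 ≤ 1 - (1-2/q)^2 := by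
  have : 0 < 2/q := by positivity
  have : 2/q ≤ 2 := by rw [div_le_iff₀ (by linarith)]; linarith
  nlinarith

lemma bn_rho_norm (q : ℝ) (hq : 1 ≤ q) : ‖bnRho q‖ = 1 := by
  have h := Real.sq_sqrt (bn_disc q hq)
  rw [← sq_eq_sq₀ (norm_nonneg _) (by norm_num), ← Complex.normSq_eq_norm_sq, Complex.normSq_apply]
  simp only [bnRho]; nlinarith

lemma bn_rho_norm' (q : ℝ) (hq : 1 ≤ q) : ‖bnRho' q‖ = 1 := by
  have h := Real.sq_sqrt (bn_disc q hq)
  rw [← sq_eq_sq₀ (norm_nonneg _) (by norm_num), ← Complex.normSq_eq_norm_sq, Complex.normSq_apply]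
  simp only [bnRho']; nlinarith

lemma bn_norm_prod (q : ℝ) (hq : 1 ≤ q) (z : ℂ) :
    (q/4 * ‖z - bnRho q‖ * ‖z - bnRho' q‖)^2 =
      (q/4)^2 * ((‖z‖^2+1)^2 - 4*(1-2/q)*z.re*(‖z‖^2+1) + 4*z.re^2 - 4*‖z‖^2 + 4*(1-2/q)^2*‖z‖^2) := by
  have h := Real.sq_sqrt (bn_disc q hq)
  rw [mul_pow, mul_pow, ← Complex.normSq_eq_norm_sq, ← Complex.normSq_eq_norm_sq, ← Complex.normSq_eq_norm_sq]
  simp only [Complex.normSq_apply, Complex.sub_re, Complex.sub_im, bnRho, bnRho']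
  set d := √(1 - (1-2/q)^2)
  set c := 1 - 2/q
  have hd : d * d = 1 - c^2 := by rw [← h]; ring
  have hd4 : d^4 = (1-c^2)^2 := by rw [← hd]; ring
  rw [mul_assoc]
  congr 1
  ring_nf
  rw [hd4, h]
  ring

/-- on the circle -/
lemma bn_G_circle (q : ℝ) (hq : 1 ≤ q) (z : ℂ) (hz : ‖z‖ = 1) (h1 : z ≠ bnRho q) (h2 : z ≠ bnRho' q) :
    bnG q z = Real.log |1 - q * ((1 - z.re)/2)| ∧ 1 - q * ((1 - z.re)/2) ≠ 0 := by
  have hn := bn_norm_prod q hq z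
  have n1 : 0 < ‖z - bnRho q‖ := norm_pos_iff.2 (sub_ne_zero.2 h1)
  have n2 : 0 < ‖z - bnRho' q‖ := norm_pos_iff.2 (sub_ne_zero.2 h2)
  have hq4 : 0 < q/4 := by positivity
  have e : q/4 * ‖z - bnRho q‖ * ‖z - bnRho' q‖ = |1 - q * ((1 - z.re)/2)| := by
    rw [← abs_of_pos (show 0 < q/4 * ‖z - bnRho q‖ * ‖z - bnRho' q‖ by positivity), ← sq_eq_sq_iff_abs_eq_abs, hn, hz]
    have : q ≠ 0 := by positivity
    field_simp
    ring
  refine ⟨?_, ?_⟩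
  · rw [← e, Real.log_mul (by positivity) (by positivity), Real.log_mul (by positivity) (by positivity), bnG]
  · rw [← abs_pos, ← e]; positivity

/-- inside the disc -/
lemma bn_G_disc (q α β r : ℝ) (hq : 1 ≤ q) (z : ℂ) (hr0 : 0 < r) (hr1 : r < 1) (hz : ‖z‖ = r)
    (hE : 1 + r^2 = 2*r*(α+β)) (hD : z.re = r * (β - α)) :
    bnG q z = Real.log r + (1/2) * Real.log (1 - q + q*β^2 + (q^2-q)*α^2) ∧
    0 < 1 - q + q*β^2 + (q^2-q)*α^2 := by
  have hn := bn_norm_prod q hq z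
  have n1 : 0 < ‖z - bnRho q‖ := norm_pos_iff.2 (sub_ne_zero.2 (by
    rintro rfl; rw [bn_rho_norm q hq] at hz; linarith))
  have n2 : 0 < ‖z - bnRho' q‖ := norm_pos_iff.2 (sub_ne_zero.2 (by
    rintro rfl; rw [bn_rho_norm' q hq] at hz; linarith))
  have hq4 : 0 < q/4 := by positivity
  have e : (q/4 * ‖z - bnRho q‖ * ‖z - bnRho' q‖)^2 = r^2 * (1 - q + q*β^2 + (q^2-q)*α^2) := by
    rw [hn, hz, hD, add_comm, add_comm (r^2), hE]
    have : q ≠ 0 := by positivity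
    field_simp
    ring
  have pos : 0 < 1 - q + q*β^2 + (q^2-q)*α^2 := by
    have h : 0 < r^2 * (1 - q + q*β^2 + (q^2-q)*α^2) := by rw [← e]; positivity
    exact pos_of_mul_pos_right h (by positivity)
  refine ⟨?_, pos⟩
  have := congrArg Real.log e
  rw [Real.log_pow, Real.log_mul (by positivity) (by positivity), Real.log_mul (by positivity) (by positivity),
    Real.log_mul (by positivity) (by positivity), Real.log_pow] at this
  rw [bnG]
  push_cast at this
  linarith

lemma bn_poisson_cont (W : ℂ) (hW : ‖W‖ < 1) :
    ContinuousOn (poissonKernel 0 W) (Metric.sphere 0 1) := by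
  unfold poissonKernel
  apply ContinuousOn.div (by fun_prop) (by fun_prop)
  intro z hz
  have : ‖z‖ = 1 := by simpa using hz
  simp only [sub_zero]
  have : z ≠ W := by rintro rfl; linarith
  have := norm_pos_iff.2 (sub_ne_zero.2 this)
  positivity

lemma bn_int (F : ℂ → ℝ) (hF : ContinuousOn F (Metric.sphere 0 1)) (g : ℂ → ℝ) (hg : CircleIntegrable g 0 1) :
    CircleIntegrable (fun z => F z * g z) 0 1 := by
  unfold CircleIntegrable at *
  apply IntervalIntegrable.continuousOn_mul hg
  apply ContinuousOn.comp hF (by fun_prop)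
  intro θ _
  simp [circleMap]

lemma bn_log_int (ρ : ℂ) : CircleIntegrable (fun z => Real.log ‖z - ρ‖) 0 1 := by
  apply MeromorphicOn.circleIntegrable_log_norm
  apply (analyticOnNhd_id.sub analyticOnNhd_const).meromorphicOn

lemma bn_const_int (c : ℝ) : CircleIntegrable (fun _ : ℂ => c) 0 1 := by simp [CircleIntegrable]

lemma bn_G_int (q : ℝ) : CircleIntegrable (bnG q) 0 1 := by
  unfold bnG
  exact (((bn_const_int _).add (bn_log_int _)).add (bn_log_int _))

lemma bn_pois_const (W : ℂ) (hW : ‖W‖ < 1) (c : ℝ) :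
    Real.circleAverage (fun z => poissonKernel 0 W z * c) 0 1 = c := by
  have := InnerProductSpace.HarmonicContOnCl.circleAverage_re_herglotzRieszKernel_smul (f := fun _ => c) (c := 0) (w := W) (R := 1)
    ⟨fun z _ => by exact InnerProductSpace.harmonicAt_const c, continuousOn_const⟩ (by simpa using hW)
  rw [← poissonKernel_eq_re_herglotzRieszKernel] at this
  exact this

lemma bn_pois_log (W ρ : ℂ) (hW : ‖W‖ < 1) (hρ : ‖ρ‖ = 1) :
    Real.circleAverage (fun z => poissonKernel 0 W z * Real.log ‖z - ρ‖) 0 1 = Real.log ‖W - ρ‖ := by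
  have := circleAverage_re_herglotzRieszKernel_mul_log (w := W) (ρ := ρ) (c := 0) (R := 1) (by simpa using hρ) (by simpa using hW)
  rw [← poissonKernel_eq_re_herglotzRieszKernel] at this
  exact this

lemma bn_pois_G (W : ℂ) (q : ℝ) (hq : 1 ≤ q) (hW : ‖W‖ < 1) :
    Real.circleAverage (fun z => poissonKernel 0 W z * bnG q z) 0 1 = bnG q W := by
  have hc := bn_poisson_cont W hW
  have i0 := bn_int _ hc _ (bn_const_int (Real.log (q/4)))
  have i1 := bn_int _ hc _ (bn_log_int (bnRho q))
  have i2 := bn_int _ hc _ (bn_log_int (bnRho' q))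
  simp only [bnG, mul_add]
  have i01 : CircleIntegrable (fun z => poissonKernel 0 W z * Real.log (q/4) + poissonKernel 0 W z * Real.log ‖z - bnRho q‖) 0 1 :=
    CircleIntegrable.add i0 i1
  rw [Real.circleAverage_fun_add i01 i2, Real.circleAverage_fun_add i0 i1, bn_pois_const W hW,
    bn_pois_log W _ hW (bn_rho_norm q hq), bn_pois_log W _ hW (bn_rho_norm' q hq)]

noncomputable def bnK (ρ : ℝ) (W0 W1 : ℂ) (z : ℂ) : ℝ :=
  (poissonKernel 0 W0 z + poissonKernel 0 (starRingEnd ℂ W0) z)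
   - ρ * (poissonKernel 0 W1 z + poissonKernel 0 (starRingEnd ℂ W1) z)

lemma bn_rho_conj (q : ℝ) : bnRho' q = starRingEnd ℂ (bnRho q) := by
  apply Complex.ext <;> simp [bnRho, bnRho']

lemma bn_G_conj (q : ℝ) (z : ℂ) : bnG q (starRingEnd ℂ z) = bnG q z := by
  unfold bnG
  have h1 : ‖starRingEnd ℂ z - bnRho q‖ = ‖z - bnRho' q‖ := by
    rw [bn_rho_conj, ← Complex.norm_conj]; simp
  have h2 : ‖starRingEnd ℂ z - bnRho' q‖ = ‖z - bnRho q‖ := by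
    rw [bn_rho_conj, ← map_sub, Complex.norm_conj]
  rw [h1, h2]; ring

lemma bn_K_cont (ρ : ℝ) (W0 W1 : ℂ) (h0 : ‖W0‖ < 1) (h1 : ‖W1‖ < 1) :
    ContinuousOn (bnK ρ W0 W1) (Metric.sphere 0 1) := by
  unfold bnK
  have a := bn_poisson_cont W0 h0
  have b := bn_poisson_cont W1 h1
  have c := bn_poisson_cont (starRingEnd ℂ W0) (by rwa [Complex.norm_conj])
  have d := bn_poisson_cont (starRingEnd ℂ W1) (by rwa [Complex.norm_conj])
  fun_prop

lemma bn_K_G (ρ : ℝ) (W0 W1 : ℂ) (h0 : ‖W0‖ < 1) (h1 : ‖W1‖ < 1) (q : ℝ) (hq : 1 ≤ q) :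
    Real.circleAverage (fun z => bnK ρ W0 W1 z * bnG q z) 0 1 = 2 * (bnG q W0 - ρ * bnG q W1) := by
  have h0' : ‖starRingEnd ℂ W0‖ < 1 := by rwa [Complex.norm_conj]
  have h1' : ‖starRingEnd ℂ W1‖ < 1 := by rwa [Complex.norm_conj]
  have a := bn_int _ (bn_poisson_cont W0 h0) _ (bn_G_int q)
  have b := bn_int _ (bn_poisson_cont W1 h1) _ (bn_G_int q)
  have c := bn_int _ (bn_poisson_cont _ h0') _ (bn_G_int q)
  have d := bn_int _ (bn_poisson_cont _ h1') _ (bn_G_int q)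
  have e : (fun z => bnK ρ W0 W1 z * bnG q z) = (fun z => (poissonKernel 0 W0 z * bnG q z + poissonKernel 0 (starRingEnd ℂ W0) z * bnG q z)
    + (-ρ) • (poissonKernel 0 W1 z * bnG q z + poissonKernel 0 (starRingEnd ℂ W1) z * bnG q z)) := by
    ext z; simp only [bnK, smul_eq_mul]; ring
  have ac : CircleIntegrable (fun z => poissonKernel 0 W0 z * bnG q z + poissonKernel 0 (starRingEnd ℂ W0) z * bnG q z) 0 1 :=
    CircleIntegrable.add a c
  have bd : CircleIntegrable (fun z => (-ρ) • (poissonKernel 0 W1 z * bnG q z + poissonKernel 0 (starRingEnd ℂ W1) z * bnG q z)) 0 1 :=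
    (CircleIntegrable.add b d).const_smul
  rw [e, Real.circleAverage_fun_add ac bd, Real.circleAverage_fun_smul,
    Real.circleAverage_fun_add a c, Real.circleAverage_fun_add b d, bn_pois_G _ q hq h0, bn_pois_G _ q hq h0',
    bn_pois_G _ q hq h1, bn_pois_G _ q hq h1', bn_G_conj, bn_G_conj]
  simp only [smul_eq_mul]; ring

lemma bn_avg_sum (F : ℂ → ℝ) (hF : ContinuousOn F (Metric.sphere 0 1)) (s : Multiset ℝ) :
    CircleIntegrable (fun z => F z * (s.map (fun q => bnG q z)).sum) 0 1 ∧
    Real.circleAverage (fun z => F z * (s.map (fun q => bnG q z)).sum) 0 1 =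
     (s.map (fun q => Real.circleAverage (fun z => F z * bnG q z) 0 1)).sum := by
  induction s using Multiset.induction_on with
  | empty => simp [CircleIntegrable, Real.circleAverage_const]
  | cons q s ih =>
    have a := bn_int F hF _ (bn_G_int q)
    simp only [Multiset.map_cons, Multiset.sum_cons, mul_add]
    refine ⟨CircleIntegrable.add a ih.1, ?_⟩
    rw [Real.circleAverage_fun_add a ih.1, ih.2]

lemma bn_sum_G_circle (s : Multiset ℝ) (hs : ∀ q ∈ s, 1 ≤ q) (z : ℂ) (hz : ‖z‖ = 1)
    (h : ∀ q ∈ s, z ≠ bnRho q ∧ z ≠ bnRho' q) :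
    (s.map (fun q => bnG q z)).sum = Real.log ((s.map (fun q => |1 - q * ((1 - z.re)/2)|)).prod)
     ∧ 0 < (s.map (fun q => |1 - q * ((1 - z.re)/2)|)).prod := by
  induction s using Multiset.induction_on with
  | empty => simp
  | cons q s ih =>
    obtain ⟨i1, i2⟩ := ih (fun q hq => hs q (Multiset.mem_cons_of_mem hq)) (fun q hq => h q (Multiset.mem_cons_of_mem hq))
    obtain ⟨a, b⟩ := bn_G_circle q (hs q (Multiset.mem_cons_self _ _)) z hz (h q (Multiset.mem_cons_self _ _)).1 (h q (Multiset.mem_cons_self _ _)).2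
    simp only [Multiset.map_cons, Multiset.sum_cons, Multiset.prod_cons]
    have b' := abs_pos.2 b
    rw [i1, a, Real.log_mul b'.ne' i2.ne']
    exact ⟨rfl, by positivity⟩

lemma bn_compare (ρ : ℝ) (W0 W1 : ℂ) (h0 : ‖W0‖ < 1) (h1 : ‖W1‖ < 1)
    (hK : ∀ z : ℂ, ‖z‖ = 1 → 0 ≤ bnK ρ W0 W1 z) (s : Multiset ℝ) (hs : ∀ q ∈ s, 1 ≤ q)
    (hb : ∀ v ∈ Set.Icc (0:ℝ) 1, (s.map (fun q => |1 - q * v|)).prod ≤ 1) :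
    (s.map (fun q => bnG q W0)).sum ≤ ρ * (s.map (fun q => bnG q W1)).sum := by
  have hc := bn_K_cont ρ W0 W1 h0 h1
  have h2 := (bn_avg_sum _ hc s).2
  have h3 : (s.map (fun q => Real.circleAverage (fun z => bnK ρ W0 W1 z * bnG q z) 0 1)).sum =
     2 * ((s.map (fun q => bnG q W0)).sum - ρ * (s.map (fun q => bnG q W1)).sum) := by
    rw [Multiset.map_congr rfl (fun q hq => bn_K_G ρ W0 W1 h0 h1 q (hs q hq)), Multiset.sum_map_mul_left,
      Multiset.sum_map_sub, Multiset.sum_map_mul_left]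
  have h4 : Real.circleAverage (fun z => bnK ρ W0 W1 z * (s.map (fun q => bnG q z)).sum) 0 1 ≤ 0 := by
    rw [Real.circleAverage_def, smul_eq_mul]
    apply mul_nonpos_of_nonneg_of_nonpos (by positivity)
    rw [← neg_nonneg, ← intervalIntegral.integral_neg]
    apply intervalIntegral.integral_nonneg_of_ae (by positivity)
    have hfin : ({z | ∃ q ∈ s, z = bnRho q ∨ z = bnRho' q} : Set ℂ).Countable := by
      have : ({z | ∃ q ∈ s, z = bnRho q ∨ z = bnRho' q} : Set ℂ) ⊆ ↑((s.map bnRho).toFinset ∪ (s.map bnRho').toFinset) := by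
        rintro z ⟨q, hq, rfl | rfl⟩
        · simp only [Finset.coe_union, Set.mem_union, Finset.mem_coe, Multiset.mem_toFinset]
          exact Or.inl (Multiset.mem_map_of_mem _ hq)
        · simp only [Finset.coe_union, Set.mem_union, Finset.mem_coe, Multiset.mem_toFinset]
          exact Or.inr (Multiset.mem_map_of_mem _ hq)
      exact (Finset.countable_toSet _).mono this
    have hz := (hfin.preimage_circleMap 0 (one_ne_zero (α := ℝ))).measure_zero MeasureTheory.volume
    filter_upwards [MeasureTheory.measure_eq_zero_iff_ae_notMem.mp hz] with θ hθ
    simp only [Set.mem_preimage, Set.mem_ofPred_eq, not_exists, not_and, not_or] at hθ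
    have hn : ‖circleMap 0 1 θ‖ = 1 := by simp
    obtain ⟨e1, e2⟩ := bn_sum_G_circle s hs (circleMap 0 1 θ) hn (fun q hq => hθ q hq)
    have hre : |(circleMap 0 1 θ).re| ≤ 1 := (Complex.abs_re_le_norm _).trans hn.le
    rw [abs_le] at hre
    have := hb ((1 - (circleMap 0 1 θ).re)/2) ⟨by linarith, by linarith⟩
    have l := Real.log_nonpos e2.le this
    rw [Pi.zero_apply, e1, neg_nonneg]
    exact mul_nonpos_of_nonneg_of_nonpos (hK _ hn) l
  linarith

lemma bn_kernel (α β r s : ℝ) (W z : ℂ) (hr0 : 0 < r) (hr1 : r < 1) (hz : ‖z‖ = 1) (hW : ‖W‖ = r)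
    (hE : 1 + r^2 = 2*r*(α+β)) (hD : W.re = r * (β - α)) (hs : 1 - r^2 = 2*r*s) :
    poissonKernel 0 W z + poissonKernel 0 (starRingEnd ℂ W) z =
      s * ((1 - (1-z.re)/2) * α + (1-z.re)/2 * β) /
       ((1 - (1-z.re)/2) * α^2 + (1-z.re)/2 * β^2 - (1-z.re)/2 * (1 - (1-z.re)/2)) ∧
    0 < ((1 - (1-z.re)/2) * α^2 + (1-z.re)/2 * β^2 - (1-z.re)/2 * (1 - (1-z.re)/2)) := by
  have n1 : 0 < ‖z - W‖ := norm_pos_iff.2 (sub_ne_zero.2 (by rintro rfl; linarith))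
  have n2 : 0 < ‖z - starRingEnd ℂ W‖ := norm_pos_iff.2 (sub_ne_zero.2 (by
    rintro rfl; rw [Complex.norm_conj] at hz; linarith))
  have hz2 : z.re*z.re + z.im*z.im = 1 := by
    have := Complex.normSq_eq_norm_sq z
    rw [hz, Complex.normSq_apply] at this; linarith
  have hW2 : W.re*W.re + W.im*W.im = r^2 := by
    have := Complex.normSq_eq_norm_sq W
    rw [hW, Complex.normSq_apply] at this; linarith
  have e1 : ‖z - W‖^2 = 1 + r^2 - 2*(z.re*W.re) - 2*(z.im*W.im) := by
    rw [← Complex.normSq_eq_norm_sq, Complex.normSq_apply, Complex.sub_re, Complex.sub_im]; nlinarith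
  have e2 : ‖z - starRingEnd ℂ W‖^2 = 1 + r^2 - 2*(z.re*W.re) + 2*(z.im*W.im) := by
    rw [← Complex.normSq_eq_norm_sq, Complex.normSq_apply, Complex.sub_re, Complex.sub_im, Complex.conj_re, Complex.conj_im]; nlinarith
  have hsum : ‖z - W‖^2 + ‖z - starRingEnd ℂ W‖^2 = 8 * r * ((1 - (1-z.re)/2) * α + (1-z.re)/2 * β) := by
    rw [e1, e2, hE, hD]; ring
  have hprod : ‖z - W‖^2 * ‖z - starRingEnd ℂ W‖^2 = 16 * r^2 * ((1 - (1-z.re)/2) * α^2 + (1-z.re)/2 * β^2 - (1-z.re)/2 * (1 - (1-z.re)/2)) := by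
    have : z.im^2 * W.im^2 = (1 - z.re^2)*(r^2 - W.re^2) := by
      rw [show z.im^2 = 1 - z.re^2 by linarith, show W.im^2 = r^2 - W.re^2 by linarith]
    rw [e1, e2, show (1 + r^2 - 2*(z.re*W.re) - 2*(z.im*W.im)) * (1 + r^2 - 2*(z.re*W.re) + 2*(z.im*W.im)) =
      (1 + r^2 - 2*(z.re*W.re))^2 - 4*(z.im^2 * W.im^2) by ring, this, hE, hD]
    ring
  have hden : 0 < ((1 - (1-z.re)/2) * α^2 + (1-z.re)/2 * β^2 - (1-z.re)/2 * (1 - (1-z.re)/2)) := by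
    have h : 0 < 16 * r^2 * ((1 - (1-z.re)/2) * α^2 + (1-z.re)/2 * β^2 - (1-z.re)/2 * (1 - (1-z.re)/2)) := by
      rw [← hprod]; positivity
    exact pos_of_mul_pos_right h (by positivity)
  refine ⟨?_, hden⟩
  simp only [poissonKernel, sub_zero, Complex.norm_conj, hz, hW]
  rw [div_add_div _ _ (by positivity) (by positivity), one_pow,
    show (1 - r^2) * ‖z - starRingEnd ℂ W‖^2 + ‖z - W‖^2 * (1 - r^2) = (1-r^2) * (‖z - W‖^2 + ‖z - starRingEnd ℂ W‖^2) by ring,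
    hsum, hprod, hs, div_eq_div_iff (by positivity) hden.ne']
  ring

lemma bn_kernel_compare (α β v : ℝ) (hα : 0 ≤ α) (hβ : 0 ≤ β) (hβ1 : β ≤ 1) (hαβ : α ≤ 1 + β)
    (hv0 : 0 ≤ v) (hv1 : v ≤ 1) (h0 : 0 < (1-v)*α^2 + v*β^2 - v*(1-v)) (h1 : 0 < (1-v)*α^2 + v*1^2 - v*(1-v)) :
    ((1-v)*α + v*1)/((1-v)*α^2 + v*1^2 - v*(1-v)) ≤ ((1-v)*α + v*β)/((1-v)*α^2 + v*β^2 - v*(1-v)) := by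
  rw [div_le_div_iff₀ h1 h0]
  have key : 0 ≤ (1-β)*v*((1-v)*(α*(1+β) - α^2 + v) + v*β) := by
    have : 0 ≤ α*(1+β) - α^2 + v := by nlinarith
    have h2 : 0 ≤ 1 - v := by linarith
    have h3 : 0 ≤ 1 - β := by linarith
    positivity
  nlinarith

/-- existence of `W` -/
lemma bn_exists_W (α β : ℝ) (hE : 1 < α + β) (h1 : β - α ≤ 1) (h2 : α - β ≤ 1) (s : ℝ) (hs0 : 0 < s)
    (hs : s^2 = (α+β)^2 - 1) :
    ∃ W : ℂ, ∃ r : ℝ, 0 < r ∧ r < 1 ∧ ‖W‖ = r ∧ 1 + r^2 = 2*r*(α+β) ∧ W.re = r*(β-α) ∧ 1 - r^2 = 2*r*s ∧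
      Real.log r = - Real.log (α + β + s) := by
  have hlt : s < α + β := abs_lt_of_sq_lt_sq (by linarith) (by linarith) |> (lt_of_le_of_lt (le_abs_self s))
  have hr0 : 0 < α + β - s := by linarith
  have hinv : (α+β-s) * (α+β+s) = 1 := by nlinarith
  have hr1 : α + β - s < 1 := by nlinarith
  have hsq : 0 ≤ 1 - (β-α)^2 := by nlinarith
  refine ⟨⟨(α+β-s)*(β-α), (α+β-s)*√(1 - (β-α)^2)⟩, α+β-s, hr0, hr1, ?_, ?_, rfl, ?_, ?_⟩
  · rw [← sq_eq_sq₀ (norm_nonneg _) hr0.le, ← Complex.normSq_eq_norm_sq, Complex.normSq_apply]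
    have := Real.sq_sqrt hsq
    simp only
    nlinarith
  · nlinarith
  · nlinarith
  · rw [← Real.log_inv, eq_inv_of_mul_eq_one_left hinv]

lemma bn_main_compare (α β s0 s1 : ℝ) (hα : 0 < α) (hβ : 0 ≤ β) (hβ1 : β ≤ 1) (hαβ : α ≤ 1 + β) (hE : 1 < α + β)
    (hs0 : 0 < s0) (hs0' : s0^2 = (α+β)^2 - 1) (hs1 : 0 < s1) (hs1' : s1^2 = (α+1)^2 - 1)
    (s : Multiset ℝ) (hs : ∀ q ∈ s, 1 ≤ q)
    (hb : ∀ v ∈ Set.Icc (0:ℝ) 1, (s.map (fun q => |1 - q * v|)).prod ≤ 1) :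
    (∀ q ∈ s, 0 < 1 - q + q*β^2 + (q^2-q)*α^2) ∧
    (s.map (fun q => (1/2) * Real.log (1 - q + q*β^2 + (q^2-q)*α^2))).sum ≤
     (s.map (fun q => s0/s1 * ((1/2) * Real.log (1 + q*(q-1)*α^2) - Real.log (1 + α + s1)) + Real.log (α+β+s0))).sum := by
  obtain ⟨W0, r0, p0, p0', n0, E0, D0, S0, L0⟩ := bn_exists_W α β hE (by linarith) (by linarith) s0 hs0 hs0'
  obtain ⟨W1, r1, p1, p1', n1, E1, D1, S1, L1⟩ := bn_exists_W α 1 (by linarith) (by linarith) (by linarith) s1 hs1 hs1'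
  have hK : ∀ z : ℂ, ‖z‖ = 1 → 0 ≤ bnK (s0/s1) W0 W1 z := by
    intro z hz
    obtain ⟨k0, d0⟩ := bn_kernel α β r0 s0 W0 z p0 p0' hz n0 E0 D0 S0
    obtain ⟨k1, d1⟩ := bn_kernel α 1 r1 s1 W1 z p1 p1' hz n1 E1 D1 S1
    rw [bnK, k0, k1, sub_nonneg]
    have hre : |z.re| ≤ 1 := (Complex.abs_re_le_norm _).trans hz.le
    rw [abs_le] at hre
    have := bn_kernel_compare α β ((1-z.re)/2) hα.le hβ hβ1 hαβ (by linarith) (by linarith) d0 d1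
    rw [mul_div_assoc, mul_div_assoc, ← mul_assoc, div_mul_cancel₀ _ hs1.ne']
    exact mul_le_mul_of_nonneg_left this hs0.le
  have hmain := bn_compare (s0/s1) W0 W1 (n0 ▸ p0') (n1 ▸ p1') hK s hs hb
  have g0 : ∀ q ∈ s, _ := fun q hq => bn_G_disc q α β r0 (hs q hq) W0 p0 p0' n0 E0 D0
  have g1 : ∀ q ∈ s, _ := fun q hq => bn_G_disc q α 1 r1 (hs q hq) W1 p1 p1' n1 E1 D1
  refine ⟨fun q hq => (g0 q hq).2, ?_⟩
  rw [Multiset.map_congr rfl (fun q hq => (g0 q hq).1), Multiset.map_congr rfl (fun q hq => (g1 q hq).1),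
    ← Multiset.sum_map_mul_left, L0, L1] at hmain
  rw [Multiset.sum_map_add] at hmain ⊢
  have e : ∀ q ∈ s, s0/s1 * ((1/2) * Real.log (1 + q*(q-1)*α^2) - Real.log (1 + α + s1)) =
      s0/s1 * (-Real.log (α + 1 + s1) + (1/2) * Real.log (1 - q + q*1^2 + (q^2-q)*α^2)) := by
    intro q hq
    rw [show 1 - q + q*1^2 + (q^2-q)*α^2 = 1 + q*(q-1)*α^2 by ring, add_comm α 1]; ring
  rw [Multiset.map_congr rfl e]
  have e2 : (s.map (fun _ : ℝ => -Real.log (α+β+s0))).sum = - (s.map (fun _ : ℝ => Real.log (α+β+s0))).sum := by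
    rw [Multiset.sum_map_neg]
  rw [e2] at hmain
  linarith
lemma bn_log_prod_le (s : Multiset ℝ) (f : ℝ → ℝ) (hf : ∀ q ∈ s, 0 < f q) :
    0 < (s.map f).prod ∧ Real.log (s.map f).prod = (s.map (fun q => Real.log (f q))).sum := by
  induction s using Multiset.induction_on with
  | empty => simp
  | cons q s ih =>
    obtain ⟨i1, i2⟩ := ih (fun q hq => hf q (Multiset.mem_cons_of_mem hq))
    have h := hf q (Multiset.mem_cons_self _ _)
    simp only [Multiset.map_cons, Multiset.sum_cons, Multiset.prod_cons]
    exact ⟨by positivity, by rw [Real.log_mul h.ne' i1.ne', i2]⟩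

lemma bn_core (ξ y α : ℝ) (hξ : 0 ≤ ξ) (hy : 0 < y) (hc : 6*y ≤ 5*(1-ξ^2))
    (hα : 0 ≤ α) (hα2 : α^2 = (1-ξ^2+y^2)^2 + 4*ξ^2*y^2)
    (s : Multiset ℝ) (hs : ∀ q ∈ s, 1 ≤ q)
    (hb : ∀ v ∈ Set.Icc (0:ℝ) 1, (s.map (fun q => |1 - q * v|)).prod ≤ 1)
    (hA : s.sum * y = 2.5) :
    (s.map (fun q => 1 - q + q*(ξ^2+y^2)^2 + (q^2-q)*α^2)).prod ≤ 2.5^4 := by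
  set β := ξ^2+y^2 with hβ
  have hβ0 : 0 ≤ β := by positivity
  have hx1 : 0 < 1 - ξ^2 := by nlinarith
  have hβ1 : β ≤ 1 := by
    have : y ≤ 5/6*(1-ξ^2) := by linarith
    nlinarith [sq_nonneg ξ]
  have hα1 : α ≤ 1 + β := by
    apply abs_le_of_sq_le_sq' _ (by positivity) |>.2
    rw [hα2, hβ]; nlinarith [sq_nonneg ξ]
  have hab : 0 < α - (1-β) := by
    have : (1-β)^2 < α^2 := by rw [hα2, hβ]; nlinarith
    have := abs_lt_of_sq_lt_sq this hα
    have := le_abs_self (1-β)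
    linarith
  have ha0 : 0 < (α-β+1)/2 := by linarith
  have he0 : 0 < (α+β-1)/2 := by linarith
  obtain ⟨r, hr, hr0⟩ : ∃ r, r^2 = (α-β+1)/2 ∧ 0 < r := ⟨_, Real.sq_sqrt ha0.le, Real.sqrt_pos.2 ha0⟩
  obtain ⟨k, hk, hk0⟩ : ∃ k, k^2 = (α+β-1)/2 ∧ 0 < k := ⟨_, Real.sq_sqrt he0.le, Real.sqrt_pos.2 he0⟩
  obtain ⟨p, hp, hp0⟩ : ∃ p, p^2 = 1 + k^2 ∧ 0 < p := ⟨_, Real.sq_sqrt (by positivity), Real.sqrt_pos.2 (by positivity)⟩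
  have hαpos : 0 < α := by linarith
  obtain ⟨s1, hs1, hs10⟩ : ∃ s1, s1^2 = α^2+2*α ∧ 0 < s1 := ⟨_, Real.sq_sqrt (by positivity), Real.sqrt_pos.2 (by positivity)⟩
  have hα' : r^2 + k^2 = α := by rw [hr, hk]; ring
  have hrk : r*k = y := by
    rw [← sq_eq_sq₀ (by positivity) hy.le, mul_pow, hr, hk]
    nlinarith
  have hr1 : r ≤ 1 := by nlinarith
  have hcons : 6*(r*k) ≤ 5*(r^2-k^2+r^2*k^2) := by
    have : r^2*k^2 = y^2 := by rw [← mul_pow, hrk]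
    rw [this, hrk, hr, hk]
    have : (α-β+1)/2 - (α+β-1)/2 + y^2 = 1 - ξ^2 := by rw [hβ]; ring
    linarith
  obtain ⟨hpos, hmain⟩ := bn_main_compare α β (2*k*p) s1 hαpos hβ0 hβ1 hα1 (by linarith) (by positivity)
    (by rw [mul_pow, mul_pow, hp, hk]; ring) hs10 (by rw [hs1]; ring) s hs hb
  have hfin : ∀ q ∈ s, (2*k*p)/s1 * ((1/2) * Real.log (1 + q*(q-1)*α^2) - Real.log (1 + α + s1)) + Real.log (α+β+2*k*p)
      ≤ (2*y*0.3665) * q := by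
    intro q hq
    have := bn_final r k p s1 q hr0 hr1 hk0 hcons hp0 hp hs10 (by rw [hα', hs1]) (hs q hq)
    rw [hα', hrk, show 1 + 2*k^2 = α + β by rw [hk]; ring] at this
    linarith
  have h2 := Multiset.sum_map_le_sum_map _ _ hfin
  rw [Multiset.sum_map_mul_left, Multiset.map_id'] at h2
  rw [Multiset.sum_map_mul_left] at hmain
  obtain ⟨pp, lp⟩ := bn_log_prod_le s _ hpos
  have h3 := bn_log25
  rw [← Real.log_le_log_iff pp (by norm_num), lp, Real.log_pow]
  push_cast
  nlinarith

/-- Real-rooted, symmetric, all zeros in the open interval. -/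
structure BNOsc (P : Polynomial ℝ) : Prop where
  spl : P.Splits
  ne0 : P ≠ 0
  loc : ∀ a ∈ P.roots, |a| < 1
  sym : ∃ e : ℝ, e ^ 2 = 1 ∧ P.comp (-X) = C e * P

lemma BNOsc.eval_ne {P : Polynomial ℝ} (h : BNOsc P) {x : ℝ} (hx : 1 ≤ |x|) : P.eval x ≠ 0 := by
  intro h0
  have := h.loc x ((mem_roots h.ne0).2 h0)
  linarith

lemma BNOsc.abs_sym {P : Polynomial ℝ} (h : BNOsc P) (x : ℝ) : |P.eval (-x)| = |P.eval x| := by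
  obtain ⟨e, he, hP⟩ := h.sym
  have := congrArg (eval x) hP
  simp only [eval_comp, eval_neg, eval_X, eval_mul, eval_C] at this
  rw [this, abs_mul]
  have : |e| = 1 := by
    rw [← abs_one]; exact sq_eq_sq_iff_abs_eq_abs _ _ |>.1 (by simpa using he)
  rw [this, one_mul]

lemma BNOsc.roots_neg {P : Polynomial ℝ} (h : BNOsc P) : P.roots.map (fun x => -x) = P.roots := by
  obtain ⟨e, he, hP⟩ := h.sym
  have he0 : e ≠ 0 := by rintro rfl; norm_num at he
  rw [← roots_comp_neg_X, hP, roots_C_mul _ he0]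

lemma BNOsc.neg_mem {P : Polynomial ℝ} (h : BNOsc P) {a : ℝ} (ha : a ∈ P.roots) :
    -a ∈ P.roots := by
  rw [← h.roots_neg]; exact Multiset.mem_map_of_mem _ ha

lemma BNOsc.two_sum {P : Polynomial ℝ} (h : BNOsc P) (f : ℝ → ℝ) :
    2 * (P.roots.map f).sum = (P.roots.map (fun a => f a + f (-a))).sum := by
  rw [Multiset.sum_map_add, two_mul]
  congr 1
  conv_lhs => rw [← h.roots_neg]
  rw [Multiset.map_map]; rfl

lemma BNOsc.sq_prod {P : Polynomial ℝ} (h : BNOsc P) (f : ℝ → ℝ) :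
    (P.roots.map f).prod ^ 2 = (P.roots.map (fun a => f a * f (-a))).prod := by
  rw [Multiset.prod_map_mul, sq]
  congr 1
  conv_lhs => rw [← h.roots_neg]
  rw [Multiset.map_map]; rfl

lemma BNOsc.deriv_ne {P : Polynomial ℝ} (h : BNOsc P) (hn : 1 ≤ P.natDegree) {x : ℝ}
    (hx : ∀ a ∈ P.roots, a < x) : (derivative P).eval x ≠ 0 := by
  have h0 : P.eval x ≠ 0 := by
    intro h0
    exact lt_irrefl _ (hx x ((mem_roots h.ne0).2 h0))
  rw [h.spl.eval_derivative_eq_eval_mul_sum h0]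
  refine mul_ne_zero h0 (ne_of_gt ?_)
  have hc := splits_iff_card_roots.1 h.spl
  have hne : P.roots ≠ 0 := by
    intro h1; rw [h1] at hc; simp at hc; omega
  obtain ⟨a, ha⟩ := Multiset.exists_mem_of_ne_zero hne
  obtain ⟨t, ht⟩ := Multiset.exists_cons_of_mem ha
  rw [ht, Multiset.map_cons, Multiset.sum_cons]
  have h1 : 0 < 1 / (x - a) := one_div_pos.2 (by linarith [hx a ha])
  have h2 : 0 ≤ (t.map (fun z => 1 / (x - z))).sum := by
    apply Multiset.sum_nonneg
    intro y hy
    obtain ⟨z, hz, rfl⟩ := Multiset.mem_map.1 hy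
    have := hx z (by rw [ht]; exact Multiset.mem_cons_of_mem hz)
    exact (one_div_pos.2 (by linarith)).le
  linarith

lemma BNOsc.deriv {P : Polynomial ℝ} (h : BNOsc P) (hn : 1 ≤ P.natDegree) :
    BNOsc (derivative P) := by
  have hc := splits_iff_card_roots.1 h.spl
  have hne : derivative P ≠ 0 := by
    intro h0
    have := derivative_eq_zero.1 h0
    omega
  obtain ⟨e, he, hP⟩ := h.sym
  have hs : (derivative P).comp (-X) = C (-e) * derivative P := by
    have := congrArg derivative hP
    rw [derivative_comp, derivative_C_mul] at this
    simp only [derivative_neg, derivative_X] at this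
    rw [C_neg, neg_mul, ← this]; ring
  have hs0 : ∀ x, (derivative P).eval x = 0 → (derivative P).eval (-x) = 0 := by
    intro x hx
    have := congrArg (eval x) hs
    simpa [eval_comp, hx] using this
  have key : ∀ x, (derivative P).eval x = 0 → x < 1 := by
    intro x hx
    by_contra hlt
    refine h.deriv_ne hn (x := x) (fun a ha => ?_) hx
    have := h.loc a ha
    linarith [(abs_lt.1 this).2]
  refine ⟨?_, hne, ?_, -e, by simpa using he, hs⟩
  · rw [splits_iff_card_roots]
    apply le_antisymm (card_roots' _)
    rw [natDegree_derivative]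
    have := card_roots_le_derivative P
    omega
  · intro a ha
    have h0 := (mem_roots hne).1 ha
    rw [abs_lt]
    exact ⟨by linarith [key _ (hs0 a h0)], key a h0⟩

lemma bn_cons2 {s : Multiset ℝ} {a b : ℝ} (ha : a ∈ s) (hb : b ∈ s) (hab : a ≠ b) :
    ∃ t, s = a ::ₘ b ::ₘ t := by
  obtain ⟨t, rfl⟩ := Multiset.exists_cons_of_mem ha
  have : b ∈ t := by
    rcases Multiset.mem_cons.1 hb with h | h
    · exact absurd h.symm hab
    · exact h
  obtain ⟨u, rfl⟩ := Multiset.exists_cons_of_mem this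
  exact ⟨u, rfl⟩

noncomputable def bnE (p : Polynomial ℝ) (x : ℝ) : ℝ :=
  (derivative p).eval x ^ 2 - p.eval x * (derivative (derivative p)).eval x

lemma bnE_mul (p : Polynomial ℝ) (x a : ℝ) :
    bnE ((X - C a) * p) x = p.eval x ^ 2 + (x - a) ^ 2 * bnE p x := by
  simp only [bnE, derivative_mul, derivative_sub, derivative_X, derivative_C, eval_mul, eval_add,
    eval_sub, eval_X, eval_C, eval_one, sub_zero, one_mul, derivative_add]
  ring

lemma bnE_prod_le (s : Multiset ℝ) (x y : ℝ) :
    0 ≤ bnE (s.map (fun a => X - C a)).prod x ∧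
    (s.map (fun a => X - C a)).prod.eval x ^ 2 + y ^ 2 * bnE (s.map (fun a => X - C a)).prod x
      ≤ (s.map (fun a => (x - a) ^ 2 + y ^ 2)).prod := by
  induction s using Multiset.induction_on with
  | empty => simp [bnE]
  | cons a s ih =>
    obtain ⟨h0, h1⟩ := ih
    simp only [Multiset.map_cons, Multiset.prod_cons]
    rw [bnE_mul]
    simp only [eval_mul, eval_sub, eval_X, eval_C]
    set p := (s.map (fun a => X - C a)).prod
    refine ⟨by positivity, ?_⟩
    have := mul_le_mul_of_nonneg_left h1 (by positivity : 0 ≤ (x - a) ^ 2 + y ^ 2)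
    have h4 : 0 ≤ y ^ 4 * bnE p x := by positivity
    nlinarith [this, h4]

lemma bnE_prod_eq (s : Multiset ℝ) (x : ℝ) (hx : ∀ a ∈ s, x ≠ a) :
    bnE (s.map (fun a => X - C a)).prod x =
      (s.map (fun a => X - C a)).prod.eval x ^ 2 * (s.map (fun a => 1 / (x - a) ^ 2)).sum := by
  induction s using Multiset.induction_on with
  | empty => simp [bnE]
  | cons a s ih =>
    have h0 := ih (fun b hb => hx b (Multiset.mem_cons_of_mem hb))
    have ha : x - a ≠ 0 := sub_ne_zero.2 (hx a (Multiset.mem_cons_self a s))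
    simp only [Multiset.map_cons, Multiset.prod_cons, Multiset.sum_cons]
    rw [bnE_mul, h0]
    simp only [eval_mul, eval_sub, eval_X, eval_C]
    field_simp

lemma bnE_C_mul (c : ℝ) (p : Polynomial ℝ) (x : ℝ) : bnE (C c * p) x = c ^ 2 * bnE p x := by
  simp only [bnE, derivative_C_mul, eval_mul, eval_C]; ring

lemma BNOsc.prod_eq {P : Polynomial ℝ} (h : BNOsc P) :
    C P.leadingCoeff * (P.roots.map (fun a => X - C a)).prod = P :=
  C_leadingCoeff_mul_prod_multiset_X_sub_C (splits_iff_card_roots.1 h.spl)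

lemma BNOsc.E_le {P : Polynomial ℝ} (h : BNOsc P) (x y : ℝ) :
    P.eval x ^ 2 + y ^ 2 * bnE P x ≤
      P.leadingCoeff ^ 2 * (P.roots.map (fun a => (x - a) ^ 2 + y ^ 2)).prod := by
  have := mul_le_mul_of_nonneg_left (bnE_prod_le P.roots x y).2 (sq_nonneg P.leadingCoeff)
  refine le_trans (le_of_eq ?_) this
  conv_lhs => rw [← h.prod_eq]
  rw [bnE_C_mul, eval_mul, eval_C]
  ring

lemma BNOsc.E_eq {P : Polynomial ℝ} (h : BNOsc P) {x : ℝ} (hx : P.eval x ≠ 0) :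
    bnE P x = P.eval x ^ 2 * (P.roots.map (fun a => 1 / (x - a) ^ 2)).sum := by
  have := bnE_prod_eq P.roots x (by
    rintro a ha rfl
    exact hx ((mem_roots h.ne0).1 ha))
  conv_lhs => rw [← h.prod_eq]
  rw [bnE_C_mul, this]
  conv_rhs => rw [← h.prod_eq]
  rw [eval_mul, eval_C]
  simp only [h.prod_eq]
  ring

noncomputable def bnq (a : ℝ) : ℝ := 1 / (1 - a ^ 2)

lemma bn_pos {a : ℝ} (ha : |a| < 1) : 0 < 1 - a ^ 2 := by
  have := (abs_lt.1 ha); nlinarith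

lemma bnq_ge {a : ℝ} (ha : |a| < 1) : 1 ≤ bnq a := by
  have := bn_pos ha
  rw [bnq, le_div_iff₀ this]; nlinarith [sq_nonneg a]

lemma BNOsc.sum_one {P : Polynomial ℝ} (h : BNOsc P) :
    (derivative P).eval 1 = P.eval 1 * (P.roots.map bnq).sum := by
  rw [h.spl.eval_derivative_eq_eval_mul_sum (h.eval_ne (by simp))]
  congr 1
  have h2 := h.two_sum (fun z => 1 / (1 - z))
  have : (P.roots.map (fun a => 1 / (1 - a) + 1 / (1 - -a))) = P.roots.map (fun a => 2 * bnq a) := by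
    apply Multiset.map_congr rfl
    intro a ha
    have := abs_lt.1 (h.loc a ha)
    have h3 : 1 - a ≠ 0 := by linarith
    have h4 : 1 + a ≠ 0 := by linarith
    have h5 : 1 - a ^ 2 ≠ 0 := (bn_pos (h.loc a ha)).ne'
    rw [bnq, sub_neg_eq_add]; field_simp; ring
  rw [this, Multiset.sum_map_mul_left] at h2
  linarith

lemma BNOsc.sum_two {P : Polynomial ℝ} (h : BNOsc P) :
    (P.roots.map (fun a => 1 / (1 - a) ^ 2)).sum =
      2 * (P.roots.map (fun a => bnq a ^ 2)).sum - (P.roots.map bnq).sum := by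
  have h2 := h.two_sum (fun z => 1 / (1 - z) ^ 2)
  have : (P.roots.map (fun a => 1 / (1 - a) ^ 2 + 1 / (1 - -a) ^ 2)) =
      P.roots.map (fun a => 4 * bnq a ^ 2 + (-2) * bnq a) := by
    apply Multiset.map_congr rfl
    intro a ha
    have := abs_lt.1 (h.loc a ha)
    have h3 : 1 - a ≠ 0 := by linarith
    have h4 : 1 + a ≠ 0 := by linarith
    have h5 : 1 - a ^ 2 = (1 - a) * (1 + a) := by ring
    rw [bnq, sub_neg_eq_add, h5]; field_simp; ring
  rw [this, Multiset.sum_map_add, Multiset.sum_map_mul_left, Multiset.sum_map_mul_left] at h2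
  linarith

lemma BNOsc.A_rel {P : Polynomial ℝ} (h : BNOsc P) (hn : 1 ≤ P.natDegree) :
    (P.roots.map bnq).sum * ((derivative P).roots.map bnq).sum =
    (P.roots.map bnq).sum ^ 2 + (P.roots.map bnq).sum
      - 2 * (P.roots.map (fun a => bnq a ^ 2)).sum := by
  have h0 := h.eval_ne (x := 1) (by simp)
  have h1 := h.E_eq h0
  rw [h.sum_two, bnE, (h.deriv hn).sum_one, h.sum_one] at h1
  have h2 := pow_ne_zero 2 h0
  apply mul_left_cancel₀ h2
  linarith

lemma BNOsc.sq_eval {P : Polynomial ℝ} (h : BNOsc P) (x : ℝ) :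
    P.eval x ^ 2 = P.leadingCoeff ^ 2 * (P.roots.map (fun a => x ^ 2 - a ^ 2)).prod := by
  rw [h.spl.eval_eq_prod_roots, mul_pow, h.sq_prod]
  congr 3
  ext a; ring

lemma BNOsc.sq_ratio {P : Polynomial ℝ} (h : BNOsc P) (x : ℝ) :
    P.eval x ^ 2 = P.eval 1 ^ 2 * (P.roots.map (fun a => 1 - bnq a * (1 - x ^ 2))).prod := by
  rw [h.sq_eval, h.sq_eval 1, mul_assoc, ← Multiset.prod_map_mul]
  congr 2
  apply Multiset.map_congr rfl
  intro a ha
  have h5 : 1 - a ^ 2 ≠ 0 := (bn_pos (h.loc a ha)).ne'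
  rw [bnq]; field_simp; ring

lemma BNOsc.R_sq {P : Polynomial ℝ} (h : BNOsc P) (ξ y α : ℝ)
    (hα2 : α^2 = (1-ξ^2+y^2)^2 + 4*ξ^2*y^2) :
    (P.leadingCoeff ^ 2 * (P.roots.map (fun a => (ξ - a) ^ 2 + y ^ 2)).prod) ^ 2 =
      P.eval 1 ^ 4 * (P.roots.map (fun a => 1 - bnq a + bnq a * (ξ^2+y^2)^2
        + (bnq a ^2 - bnq a) * α^2)).prod := by
  have : P.eval 1 ^ 4 = (P.eval 1 ^ 2) ^ 2 := by ring
  rw [this, h.sq_eval 1, mul_pow, mul_pow, h.sq_prod, ← Multiset.prod_map_pow, mul_assoc,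
    ← Multiset.prod_map_mul]
  congr 2
  apply Multiset.map_congr rfl
  intro a ha
  have h5 : 1 - a ^ 2 ≠ 0 := (bn_pos (h.loc a ha)).ne'
  rw [bnq, hα2]; field_simp; ring

lemma bn_sum_ge {s : Multiset ℝ} {f : ℝ → ℝ} (hf : ∀ a ∈ s, 1 ≤ f a) :
    (s.card : ℝ) ≤ (s.map f).sum := by
  induction s using Multiset.induction_on with
  | empty => simp
  | cons a s ih =>
    have h0 := ih (fun b hb => hf b (Multiset.mem_cons_of_mem hb))
    have := hf a (Multiset.mem_cons_self a s)
    simp only [Multiset.map_cons, Multiset.sum_cons, Multiset.card_cons, Nat.cast_add, Nat.cast_one]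
    linarith

lemma BNOsc.two_roots {P : Polynomial ℝ} (h : BNOsc P) {x : ℝ} (hx : x ∈ P.roots) (h0 : 0 < x) :
    ∃ t, P.roots = x ::ₘ (-x) ::ₘ t :=
  bn_cons2 hx (h.neg_mem hx) (by linarith)

lemma bnq_mono {x z : ℝ} (hx : 0 ≤ x) (hxz : x ≤ z) (hz : |z| < 1) : bnq x ≤ bnq z := by
  have := bn_pos hz
  rw [bnq, bnq]
  apply one_div_le_one_div_of_le this
  nlinarith

lemma bnq_neg (x : ℝ) : bnq (-x) = bnq x := by simp [bnq]

lemma BNOsc.sum_ge_two {P : Polynomial ℝ} (h : BNOsc P) (f : ℝ → ℝ) (m : ℕ) (r : ℝ)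
    (hf : ∀ a ∈ P.roots, 1 ≤ f a) (hfn : ∀ a, f (-a) = f a)
    (hm : m + 2 ≤ P.natDegree) {x : ℝ} (hx : x ∈ P.roots) (h0 : 0 < x) (hr : r ≤ f x) :
    2 * r + m ≤ (P.roots.map f).sum := by
  obtain ⟨t, ht⟩ := h.two_roots hx h0
  have hc := splits_iff_card_roots.1 h.spl
  have hg := bn_sum_ge (s := t) (f := f) (fun a ha => hf a (by rw [ht]; simp [ha]))
  rw [ht] at hc ⊢
  simp only [Multiset.card_cons] at hc
  have : (m : ℝ) ≤ t.card := by exact_mod_cast (by omega : m ≤ t.card)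
  simp only [Multiset.map_cons, Multiset.sum_cons, hfn]
  linarith

lemma BNOsc.natDegree_ge {P : Polynomial ℝ} (h : BNOsc P) {x : ℝ} (hx : x ∈ P.roots)
    (h0 : 0 < x) : 2 ≤ P.natDegree := by
  obtain ⟨t, ht⟩ := h.two_roots hx h0
  have hc := splits_iff_card_roots.1 h.spl
  rw [ht] at hc
  simp only [Multiset.card_cons] at hc
  omega

lemma BNOsc.B_ge {P : Polynomial ℝ} (h : BNOsc P) (hn : 1 ≤ P.natDegree) {ξ x : ℝ}
    (hξ : 0 ≤ ξ) (hx : x ∈ (derivative P).roots) (hξx : ξ < x)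
    (h2 : (derivative (derivative P)).eval ξ = 0) :
    3 ≤ (P.roots.map bnq).sum * (1 - ξ ^ 2) := by
  have hP := h.deriv hn
  have hx1 := hP.loc x hx
  have hd2 := hP.natDegree_ge hx (by linarith)
  have hdd := natDegree_derivative P
  have hc := splits_iff_card_roots.1 h.spl
  have hAn : (P.natDegree : ℝ) ≤ (P.roots.map bnq).sum := by
    rw [← hc]; exact bn_sum_ge (fun a ha => bnq_ge (h.loc a ha))
  rcases hξ.eq_or_lt with rfl | hpos
  · have : (3 : ℝ) ≤ P.natDegree := by exact_mod_cast (by omega : 3 ≤ P.natDegree)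
    norm_num; linarith
  have hPP := hP.deriv (by omega)
  have hd3 := hPP.natDegree_ge ((mem_roots hPP.ne0).2 h2) hpos
  have hdd2 := natDegree_derivative (derivative P)
  obtain ⟨x1, hx1m, hx1x⟩ : ∃ x1 ∈ P.roots, x ≤ x1 := by
    by_contra hcon
    push Not at hcon
    exact h.deriv_ne hn hcon ((mem_roots hP.ne0).1 hx)
  have hrel := h.A_rel hn
  have hA' := hP.sum_ge_two bnq 0 (bnq ξ) (fun a ha => bnq_ge (hP.loc a ha)) bnq_neg (by omega) hx
    (by linarith) (bnq_mono hξ hξx.le hx1)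
  have hxi : |ξ| < 1 := by rw [abs_lt] at hx1 ⊢; constructor <;> linarith
  have hR1 := bnq_ge hxi
  have hq := h.sum_ge_two (fun a => bnq a ^ 2) 2 (bnq ξ ^ 2)
    (fun a ha => one_le_pow₀ (bnq_ge (h.loc a ha))) (fun a => by rw [bnq_neg]) (by omega) hx1m
    (by linarith) (pow_le_pow_left₀ (by linarith) (bnq_mono hξ (by linarith) (h.loc x1 hx1m)) 2)
  set A := (P.roots.map bnq).sum
  set R := bnq ξ with hR
  have hRd : R * (1 - ξ ^ 2) = 1 := by
    rw [hR, bnq]; field_simp [(bn_pos hxi).ne']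
  have hApos : 0 < A := by
    have : (1 : ℝ) ≤ P.natDegree := by exact_mod_cast hn
    linarith
  push_cast at hA' hq
  have key : 2 * A * R ≤ A ^ 2 + A - 4 * R ^ 2 - 4 := by nlinarith
  have : 3 * R ≤ A := by
    by_contra hlt
    push Not at hlt
    nlinarith [sq_nonneg (R - 1), sq_nonneg (3 - R)]
  have := mul_le_mul_of_nonneg_right this (bn_pos hxi).le
  linarith

lemma bn_abs_prod (s : Multiset ℝ) (f : ℝ → ℝ) :
    (s.map (fun a => |f a|)).prod = |(s.map f).prod| := by
  induction s using Multiset.induction_on with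
  | empty => simp
  | cons a s ih => simp [ih, abs_mul]

lemma BNOsc.main_pt {P : Polynomial ℝ} (h : BNOsc P) (hn : 1 ≤ P.natDegree)
    (hmax : ∀ x ∈ Set.Icc (-1 : ℝ) 1, |P.eval x| ≤ |P.eval 1|) {ξ : ℝ} (hξ : 0 ≤ ξ)
    (h3 : 3 ≤ (P.roots.map bnq).sum * (1 - ξ ^ 2))
    (h2 : (derivative (derivative P)).eval ξ = 0) :
    |(derivative P).eval ξ| ≤ |(derivative P).eval 1| := by
  have hc := splits_iff_card_roots.1 h.spl
  have hP1 := h.eval_ne (x := 1) (by simp)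
  have hAn : (P.natDegree : ℝ) ≤ (P.roots.map bnq).sum := by
    rw [← hc]; exact bn_sum_ge (fun a ha => bnq_ge (h.loc a ha))
  have hsum := h.sum_one
  set A := (P.roots.map bnq).sum with hA
  have hApos : 0 < A := by
    have : (1 : ℝ) ≤ P.natDegree := by exact_mod_cast hn
    linarith
  set y := 2.5 / A with hy
  have hypos : 0 < y := by positivity
  have hAy : A * y = 2.5 := by rw [hy]; field_simp
  set α := Real.sqrt ((1-ξ^2+y^2)^2 + 4*ξ^2*y^2) with hα
  have hα2 : α^2 = (1-ξ^2+y^2)^2 + 4*ξ^2*y^2 := Real.sq_sqrt (by positivity)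
  have hcore := bn_core ξ y α hξ hypos
    (by
      have := mul_le_mul_of_nonneg_right h3 hypos.le
      nlinarith) (Real.sqrt_nonneg _) hα2 (P.roots.map bnq)
    (by
      intro q hq
      obtain ⟨a, ha, rfl⟩ := Multiset.mem_map.1 hq
      exact bnq_ge (h.loc a ha))
    (by
      intro v hv
      have hs := h.sq_ratio (Real.sqrt (1 - v))
      rw [Real.sq_sqrt (by linarith [hv.2])] at hs
      have hle := hmax (Real.sqrt (1 - v)) ⟨by linarith [Real.sqrt_nonneg (1 - v)],
        Real.sqrt_le_one.2 (by linarith [hv.1])⟩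
      have h6 := sq_le_sq.2 hle
      rw [hs] at h6
      rw [Multiset.map_map]
      have h7 : (P.roots.map ((fun q => |1 - q * v|) ∘ bnq)).prod =
          |(P.roots.map (fun a => 1 - bnq a * (1 - (1 - v)))).prod| := by
        rw [← bn_abs_prod]
        congr 1
        apply Multiset.map_congr rfl
        intro a _
        simp
      rw [h7, abs_of_nonneg]
      · have hp : 0 < P.eval 1 ^ 2 := by positivity
        exact le_of_mul_le_mul_left (by linarith) hp
      · have hp : 0 < P.eval 1 ^ 2 := by positivity
        exact nonneg_of_mul_nonneg_right (by rw [← hs]; positivity) hp)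
    (by rw [← hA]; exact hAy)
  rw [Multiset.map_map] at hcore
  have hR := h.R_sq ξ y α hα2
  have hE := h.E_le ξ y
  rw [bnE, h2, mul_zero, sub_zero] at hE
  set R := P.leadingCoeff ^ 2 * (P.roots.map (fun a => (ξ - a) ^ 2 + y ^ 2)).prod
  have hR2 : R ^ 2 ≤ (2.5 ^ 2 * P.eval 1 ^ 2) ^ 2 := by
    rw [hR]
    refine le_trans (mul_le_mul_of_nonneg_left hcore (by positivity)) (le_of_eq (by ring))
  have hR3 : R ≤ 2.5 ^ 2 * P.eval 1 ^ 2 := le_of_sq_le_sq hR2 (by positivity)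
  rw [hsum]
  apply sq_le_sq.1
  have h8 : y ^ 2 * (derivative P).eval ξ ^ 2 ≤ y ^ 2 * (P.eval 1 * A) ^ 2 := by
    calc _ ≤ R := by nlinarith [sq_nonneg (P.eval ξ)]
      _ ≤ _ := hR3
      _ = (A * y) ^ 2 * P.eval 1 ^ 2 := by rw [hAy]
      _ = _ := by ring
  exact le_of_mul_le_mul_left h8 (by positivity)

lemma BNOsc.step {P : Polynomial ℝ} (h : BNOsc P) (hn : 1 ≤ P.natDegree)
    (hmax : ∀ x ∈ Set.Icc (-1 : ℝ) 1, |P.eval x| ≤ |P.eval 1|) :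
    ∀ x ∈ Set.Icc (-1 : ℝ) 1, |(derivative P).eval x| ≤ |(derivative P).eval 1| := by
  have hP := h.deriv hn
  obtain ⟨ξ0, hξ0, hm0⟩ := (isCompact_Icc (a := (-1 : ℝ)) (b := 1)).exists_isMaxOn ⟨0, by simp⟩
    (f := fun x => |(derivative P).eval x|) (by fun_prop)
  obtain ⟨ξ, hξ, hξ1, hm⟩ : ∃ ξ, 0 ≤ ξ ∧ ξ ≤ 1 ∧ ∀ x ∈ Set.Icc (-1 : ℝ) 1,
      |(derivative P).eval x| ≤ |(derivative P).eval ξ| := by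
    rcases le_total 0 ξ0 with h0 | h0
    · exact ⟨ξ0, h0, hξ0.2, fun x hx => hm0 hx⟩
    · exact ⟨-ξ0, by linarith, by linarith [hξ0.1], fun x hx => by
        rw [hP.abs_sym]; exact hm0 hx⟩
  suffices hs : |(derivative P).eval ξ| ≤ |(derivative P).eval 1| from
    fun x hx => (hm x hx).trans hs
  rcases hξ1.eq_or_lt with rfl | hlt
  · exact le_rfl
  by_cases h0 : (derivative P).eval ξ = 0
  · rw [h0]; simp
  have h2 : (derivative (derivative P)).eval ξ = 0 := by
    have hloc : IsLocalMax (fun x => (derivative P).eval x ^ 2) ξ := by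
      filter_upwards [Icc_mem_nhds (by linarith : (-1 : ℝ) < ξ) hlt] with x hx
      exact sq_le_sq.2 (hm x hx)
    have hd := hloc.deriv_eq_zero
    have hd2 := (((derivative P).hasDerivAt ξ).pow 2).deriv
    have hd3 : (2 : ℝ) * (derivative P).eval ξ * (derivative (derivative P)).eval ξ = 0 := by
      rw [← hd]
      symm
      exact hd2.trans (by norm_num)
    simpa [h0] using hd3
  by_cases hz : ∃ x ∈ (derivative P).roots, ξ < x
  · obtain ⟨x, hx, hξx⟩ := hz
    exact h.main_pt hn hmax hξ (h.B_ge hn hξ hx hξx h2) h2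
  · push Not at hz
    rw [hP.spl.eval_eq_prod_roots, hP.spl.eval_eq_prod_roots, abs_mul, abs_mul]
    refine mul_le_mul_of_nonneg_left ?_ (abs_nonneg _)
    have hp0 : 0 ≤ ((derivative P).roots.map (fun a => ξ - a)).prod := by
      apply Multiset.prod_nonneg
      intro b hb
      obtain ⟨a, ha, rfl⟩ := Multiset.mem_map.1 hb
      linarith [hz a ha]
    rw [abs_of_nonneg hp0]
    refine le_trans ?_ (le_abs_self _)
    apply Multiset.prod_map_le_prod_map₀
    · intro a ha; linarith [hz a ha]
    · intro a ha; linarith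

lemma BNOsc.all {k : ℕ} : ∀ {P : Polynomial ℝ}, BNOsc P → k ≤ P.natDegree →
    (∀ x ∈ Set.Icc (-1 : ℝ) 1, |P.eval x| ≤ |P.eval 1|) →
    ∀ x ∈ Set.Icc (-1 : ℝ) 1, |(derivative^[k] P).eval x| ≤ |(derivative^[k] P).eval 1| := by
  induction k with
  | zero => intro P _ _ h; simpa using h
  | succ k ih =>
    intro P h hk hmax
    have hn : 1 ≤ P.natDegree := by omega
    simp only [Function.iterate_succ_apply]
    refine ih (h.deriv hn) ?_ (h.step hn hmax)
    rw [natDegree_derivative]; omega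

/-- Bojanov–Naidenov, symmetric case: for a symmetric oscillating polynomial `P`
on `[-1,1]` with `max_{[-1,1]} |P| = |P(1)| = 1`, every derivative attains its
maximal absolute value over `[-1,1]` at the point `1`. -/
theorem bojanov_naidenov_symmetric (n : ℕ) (P : Polynomial ℝ)
    (hdeg : P.natDegree = n)
    (hcard : P.roots.card = n)
    (hloc : ∀ x ∈ P.roots, x ∈ Set.Icc (-1 : ℝ) 1)
    (hsym : ∀ x : ℝ, P.eval (-x) = (-1) ^ n * P.eval x)
    (hmax : ∀ x ∈ Set.Icc (-1 : ℝ) 1, |P.eval x| ≤ 1)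
    (h1 : |P.eval 1| = 1) :
    ∀ k : ℕ, 1 ≤ k → k ≤ n →
      ∀ x ∈ Set.Icc (-1 : ℝ) 1,
        |(derivative^[k] P).eval x| ≤ |(derivative^[k] P).eval 1| := by
  intro k _ hk
  have hne : P ≠ 0 := by rintro rfl; simp at h1
  have h10 : P.eval 1 ≠ 0 := by intro h; rw [h] at h1; simp at h1
  have hosc : BNOsc P := by
    refine ⟨splits_iff_card_roots.2 (by omega), hne, ?_, (-1) ^ n, ?_, ?_⟩
    · intro a ha
      have h0 : P.eval a = 0 := (mem_roots hne).1 ha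
      obtain ⟨ha1, ha2⟩ := hloc a ha
      rw [abs_lt]
      constructor
      · rcases ha1.eq_or_lt with h | h
        · exfalso
          rw [← h, hsym] at h0
          simp [h10] at h0
        · exact h
      · rcases ha2.eq_or_lt with h | h
        · exact absurd (h ▸ h0) h10
        · exact h
    · rw [← pow_mul, mul_comm, pow_mul]; norm_num
    · apply Polynomial.funext
      intro x
      rw [eval_comp, eval_mul, eval_C, eval_neg, eval_X]
      exact hsym x
  exact hosc.all (by omega) (by rw [h1]; exact hmax)
end
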